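/- arXiv:1912.01541 — 6 statements merged into one kernel-verified Lean document; each statement's English description precedes it below -/
import Mathlib

section
/- Convex polygon approximation lemma: there is an absolute constant C (one may take C = 10π + 15) with the following property. Let S be a nonempty finite set of points in the Euclidean plane ℝ² and let ε with 0 < ε ≤ 1 be given. Then there exists a subset Q ⊆ S with |Q| ≤ ⌈10π/√ε⌉ + 15 such that the convex hull of S is contained in the Minkowski sum of the convex hull of Q and the closed ball of radius ε · diam(S) centered at the origin, i.e., conv(S) ⊆ conv(Q) + B(ε · diam(S)). -/
open Metric Pointwise

lemma aux_circle (R : ℝ) (hR : 0 < R) (x : EuclideanSpace ℝ (Fin 2)) (hx : ‖x‖ = R)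
    (N : ℕ) (hN : 0 < N) : ∃ k ∈ Finset.range (N + 1),
      ‖x - !₂[R * Real.cos (2 * Real.pi * (k : ℕ) / N - Real.pi),
        R * Real.sin (2 * Real.pi * k / N - Real.pi)]‖ ^ 2 ≤ R ^ 2 * (2 * Real.pi / N) ^ 2 := by
  have hNr : (0 : ℝ) < N := by exact_mod_cast hN
  have hpi := Real.pi_pos
  have hx2 : x 0 ^ 2 + x 1 ^ 2 = R ^ 2 := by
    rw [← hx, EuclideanSpace.norm_sq_eq]; simp
  set z : ℂ := ⟨x 0, x 1⟩ with hz
  have hzn : ‖z‖ = R := by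
    rw [Complex.norm_eq_sqrt_sq_add_sq]
    simp only [hz]
    rw [hx2, Real.sqrt_sq hR.le]
  set θ := Complex.arg z with hθ
  have h0 : x 0 = R * Real.cos θ := by
    rw [← hzn, Complex.norm_mul_cos_arg]
  have h1 : x 1 = R * Real.sin θ := by
    rw [← hzn, Complex.norm_mul_sin_arg]
  have hlo : -Real.pi < θ := Complex.neg_pi_lt_arg z
  have hhi : θ ≤ Real.pi := Complex.arg_le_pi z
  set y := (θ + Real.pi) * N / (2 * Real.pi) with hy
  have hy0 : 0 ≤ y := by
    have : 0 ≤ θ + Real.pi := by linarith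
    positivity
  have hyN : y ≤ N := by
    rw [hy, div_le_iff₀ (by positivity)]
    nlinarith
  refine ⟨⌊y⌋₊, ?_, ?_⟩
  · rw [Finset.mem_range, Nat.lt_succ_iff]
    exact Nat.floor_le_of_le hyN
  have hf1 := Nat.floor_le hy0
  have hf2 := Nat.lt_floor_add_one y
  set k : ℝ := (⌊y⌋₊ : ℝ)
  set φ := 2 * Real.pi * k / N - Real.pi with hφ
  have hd : θ - φ = (y - k) * (2 * Real.pi / N) := by
    rw [hφ, hy]; field_simp; ring
  have hsq : (θ - φ) ^ 2 ≤ (2 * Real.pi / N) ^ 2 := by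
    rw [hd, mul_pow]
    have : (y - k) ^ 2 ≤ 1 := by nlinarith
    nlinarith [sq_nonneg (2 * Real.pi / (N : ℝ))]
  have hc := Real.one_sub_sq_div_two_le_cos (x := θ - φ)
  rw [Real.cos_sub] at hc
  rw [EuclideanSpace.norm_sq_eq]
  simp only [Fin.sum_univ_two, PiLp.sub_apply, Real.norm_eq_abs, sq_abs, h0, h1]
  simp only [PiLp.toLp_apply, Matrix.cons_val_zero, Matrix.cons_val_one]
  have e1 := Real.sin_sq_add_cos_sq θ
  have e2 := Real.sin_sq_add_cos_sq φ
  have : (R * Real.cos θ - R * Real.cos φ) ^ 2 + (R * Real.sin θ - R * Real.sin φ) ^ 2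
      = R ^ 2 * (2 - 2 * (Real.cos θ * Real.cos φ + Real.sin θ * Real.sin φ)) := by
    linear_combination R ^ 2 * e1 + R ^ 2 * e2
  rw [this]
  apply mul_le_mul_of_nonneg_left _ (sq_nonneg R)
  linarith

lemma aux_proj (K : Set (EuclideanSpace ℝ (Fin 2))) (hne : K.Nonempty) (hK : IsCompact K)
    (hc : Convex ℝ K) (x : EuclideanSpace ℝ (Fin 2)) :
    ∃ p ∈ K, ∀ y ∈ K, inner ℝ (x - p) (y - p) ≤ 0 := by
  obtain ⟨p, hp, h⟩ := exists_norm_eq_iInf_of_complete_convex hne hK.isComplete hc x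
  exact ⟨p, hp, (norm_eq_iInf_iff_real_inner_le_zero hc hp).1 h⟩

lemma aux_ray (v u c : EuclideanSpace ℝ (Fin 2)) (hu : ‖u‖ = 1) (D : ℝ) (hD : 0 < D)
    (hv : ‖v - c‖ ≤ D) : ∃ t : ℝ, D ≤ t ∧ ‖v + t • u - c‖ = 2 * D := by
  have hcont : ContinuousOn (fun t : ℝ => ‖v + t • u - c‖) (Set.Icc 0 (3 * D)) := by
    fun_prop
  have h3 : 2 * D ≤ ‖v + (3 * D) • u - c‖ := by
    have := norm_sub_norm_le ((3 * D) • u) (-(v - c))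
    rw [norm_neg, norm_smul, hu, Real.norm_of_nonneg (by linarith)] at this
    have e : (3 * D) • u - -(v - c) = v + (3 * D) • u - c := by abel
    rw [e] at this
    linarith
  obtain ⟨t, ht, he⟩ := intermediate_value_Icc (by linarith : (0 : ℝ) ≤ 3 * D) hcont
    (show 2 * D ∈ Set.Icc _ _ from ⟨by simp; linarith, h3⟩)
  refine ⟨t, ?_, he⟩
  have h4 := norm_add_le (v - c) (t • u)
  rw [norm_smul, hu, Real.norm_of_nonneg ht.1] at h4
  have e : v - c + t • u = v + t • u - c := by abel
  rw [e] at h4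
  simp only at he
  linarith

theorem convex_polygon_approximation
    (S : Finset (EuclideanSpace ℝ (Fin 2))) (hS : S.Nonempty)
    (ε : ℝ) (hε : 0 < ε) (hε1 : ε ≤ 1) :
    ∃ Q : Finset (EuclideanSpace ℝ (Fin 2)), Q ⊆ S ∧
      Q.card ≤ ⌈10 * Real.pi / Real.sqrt ε⌉₊ + 15 ∧
      convexHull ℝ (S : Set (EuclideanSpace ℝ (Fin 2))) ⊆
        convexHull ℝ (Q : Set (EuclideanSpace ℝ (Fin 2))) +
          (closedBall (0 : EuclideanSpace ℝ (Fin 2)) (ε * diam (S : Set (EuclideanSpace ℝ (Fin 2))))) := by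
  classical
  have hb : Bornology.IsBounded (S : Set (EuclideanSpace ℝ (Fin 2))) := S.finite_toSet.isBounded
  set D := diam (S : Set (EuclideanSpace ℝ (Fin 2))) with hDdef
  have hD0 : 0 ≤ D := diam_nonneg
  obtain ⟨c, hcS⟩ := hS
  have hdist : ∀ v ∈ S, ‖v - c‖ ≤ D := fun v hv => by
    rw [← dist_eq_norm]; exact dist_le_diam_of_mem hb hv hcS
  rcases hD0.eq_or_lt with hD | hD
  · refine ⟨{c}, by simpa using hcS, by simp, ?_⟩
    have : S = {c} := by
      apply Finset.eq_singleton_iff_unique_mem.2 ⟨hcS, fun v hv => ?_⟩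
      have := hdist v hv
      rw [← hD] at this
      exact sub_eq_zero.1 (norm_le_zero_iff.1 this)
    rw [this, ← hD]
    intro x hx
    exact ⟨x, hx, 0, by simp, by simp⟩
  have hpi := Real.pi_pos
  have hse : 0 < Real.sqrt ε := Real.sqrt_pos.2 hε
  set N := ⌊2 * Real.pi / Real.sqrt ε⌋₊ + 1 with hN
  have hNlt : 2 * Real.pi / Real.sqrt ε < N := by
    rw [hN]; push_cast; exact Nat.lt_floor_add_one _
  have hNle : (N : ℝ) ≤ 2 * Real.pi / Real.sqrt ε + 1 := by
    rw [hN]; push_cast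
    linarith [Nat.floor_le (show 0 ≤ 2 * Real.pi / Real.sqrt ε by positivity)]
  have hNpos : 0 < N := by omega
  have hNr : (0 : ℝ) < N := by exact_mod_cast hNpos
  set K := convexHull ℝ (S : Set (EuclideanSpace ℝ (Fin 2))) with hK
  have hKc : IsCompact K := S.finite_toSet.isCompact_convexHull (𝕜 := ℝ)
  have hKne : K.Nonempty := ⟨c, subset_convexHull _ _ hcS⟩
  set X : ℕ → EuclideanSpace ℝ (Fin 2) := fun k =>
    c + !₂[2 * D * Real.cos (2 * Real.pi * k / N - Real.pi),
      2 * D * Real.sin (2 * Real.pi * k / N - Real.pi)] with hX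
  choose p hpK hp using fun k => aux_proj K hKne hKc (convex_convexHull ℝ _) (X k)
  have hT : ∀ k, ∃ T : Finset (EuclideanSpace ℝ (Fin 2)), T ⊆ S ∧ T.card ≤ 3 ∧
      p k ∈ convexHull ℝ (T : Set (EuclideanSpace ℝ (Fin 2))) := by
    intro k
    have h := hpK k
    rw [hK, convexHull_eq_union] at h
    simp only [Set.mem_iUnion] at h
    obtain ⟨T, hTS, hai, hm⟩ := h
    refine ⟨T, by exact_mod_cast hTS, ?_, hm⟩
    have h1 := hai.card_le_finrank_succ
    have h2 := Submodule.finrank_le (vectorSpan ℝ (Set.range ((↑) : T → EuclideanSpace ℝ (Fin 2))))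
    rw [finrank_euclideanSpace_fin] at h2
    rw [Fintype.card_coe] at h1
    omega
  choose T hTS hTc hTp using hT
  refine ⟨(Finset.range (N + 1)).biUnion T, ?_, ?_, ?_⟩
  · exact Finset.biUnion_subset.2 fun k _ => hTS k
  · have h1 := Finset.card_biUnion_le_card_mul (Finset.range (N + 1)) T 3 (fun k _ => hTc k)
    rw [Finset.card_range] at h1
    refine h1.trans ?_
    have h2 := Nat.le_ceil (10 * Real.pi / Real.sqrt ε)
    have h3 : 10 * Real.pi / Real.sqrt ε = 5 * (2 * Real.pi / Real.sqrt ε) := by ring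
    have h4 : 0 ≤ 2 * Real.pi / Real.sqrt ε := by positivity
    have : (((N + 1) * 3 : ℕ) : ℝ) ≤ ((⌈10 * Real.pi / Real.sqrt ε⌉₊ + 15 : ℕ) : ℝ) := by
      push_cast
      linarith
    exact_mod_cast this
  set Q := (Finset.range (N + 1)).biUnion T with hQ
  have hpQ : ∀ k ∈ Finset.range (N + 1),
      p k ∈ convexHull ℝ (Q : Set (EuclideanSpace ℝ (Fin 2))) := fun k hk =>
    convexHull_mono (by exact_mod_cast Finset.subset_biUnion_of_mem T hk) (hTp k)
  apply convexHull_min _ ((convex_convexHull ℝ _).add (convex_closedBall _ _))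
  intro v hv
  obtain ⟨q, hq, hqv⟩ := aux_proj (convexHull ℝ (Q : Set (EuclideanSpace ℝ (Fin 2))))
    ⟨_, hpQ 0 (by simp)⟩ (Q.finite_toSet.isCompact_convexHull (𝕜 := ℝ)) (convex_convexHull ℝ _) v
  refine ⟨q, hq, v - q, ?_, by simp⟩
  rw [mem_closedBall_zero_iff]
  by_contra! hlt
  have hpos : 0 < ‖v - q‖ := lt_of_le_of_lt (by positivity) hlt
  set u := ‖v - q‖⁻¹ • (v - q) with hu
  have hu1 : ‖u‖ = 1 := by
    rw [hu, norm_smul, norm_inv, norm_norm, inv_mul_cancel₀ hpos.ne']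
  obtain ⟨w, hw, hwmax⟩ := S.exists_max_image (fun y => inner ℝ u y) ⟨c, hcS⟩
  have hwK : ∀ y ∈ K, inner ℝ u y ≤ inner ℝ u w := by
    have : K ⊆ {y | inner ℝ u y ≤ inner ℝ u w} :=
      convexHull_min (fun y hy => hwmax y hy)
        (convex_halfSpace_le (innerSL ℝ u).toLinearMap.isLinear _)
    exact this
  obtain ⟨t, htD, ht⟩ := aux_ray w u c hu1 D hD (hdist w hw)
  obtain ⟨k, hk, hkd⟩ := aux_circle (2 * D) (by linarith) _ ht N hNpos
  have hpk := hqv _ (hpQ k hk)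
  -- lower bound on inner u (w - p k)
  have hlow : ‖v - q‖ ≤ inner ℝ u (w - p k) := by
    have e1 : inner ℝ u (v - q) = ‖v - q‖ := by
      rw [hu, real_inner_smul_left, real_inner_self_eq_norm_sq]
      field_simp
    have e2 : inner ℝ u (p k - q) ≤ 0 := by
      rw [hu, real_inner_smul_left]
      exact mul_nonpos_of_nonneg_of_nonpos (by positivity) hpk
    have e3 := hwmax v hv
    simp only [inner_sub_right] at e1 e2 ⊢
    linarith
  have hA := hp k w (subset_convexHull _ _ hw)
  set s := inner ℝ u (w - p k) with hs
  have hxx : w + t • u - c - !₂[2 * D * Real.cos (2 * Real.pi * k / N - Real.pi),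
      2 * D * Real.sin (2 * Real.pi * k / N - Real.pi)] = (w - p k) + (t • u - (X k - p k)) := by
    simp only [hX]; abel
  rw [hxx] at hkd
  have hin : t * s ≤ inner ℝ (w - p k) (t • u - (X k - p k)) := by
    rw [inner_sub_right, real_inner_smul_right, real_inner_comm, ← hs,
      real_inner_comm (X k - p k)]
    linarith
  have hfour : 4 * inner ℝ (w - p k) (t • u - (X k - p k)) ≤
      ‖(w - p k) + (t • u - (X k - p k))‖ ^ 2 := by
    have := norm_add_sq_real (w - p k) (t • u - (X k - p k))
    have h2 := norm_sub_sq_real (w - p k) (t • u - (X k - p k))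
    nlinarith [sq_nonneg ‖(w - p k) - (t • u - (X k - p k))‖]
  have hsN : (2 * Real.pi / N) ^ 2 ≤ ε := by
    have : 2 * Real.pi / N ≤ Real.sqrt ε := by
      rw [div_lt_iff₀ hse] at hNlt
      rw [div_le_iff₀ hNr]; linarith
    calc _ ≤ Real.sqrt ε ^ 2 := by gcongr
      _ = ε := Real.sq_sqrt hε.le
  have hts : D * (ε * D) < t * s := by
    have : ε * D < s := lt_of_lt_of_le hlt hlow
    have h0 : 0 ≤ ε * D := by positivity
    nlinarith
  nlinarith [mul_le_mul_of_nonneg_left hsN (sq_nonneg (2 * D))]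
end

section
/- Tightness of the convex polygon approximation lemma: there exist constants c > 0 and ε₀ > 0 such that for every ε with 0 < ε < ε₀ there is a nonempty finite set S of points in ℝ² (the vertex set of a suitable regular polygon inscribed in a circle of unit radius) with the property that every subset Q ⊆ S satisfying conv(S) ⊆ conv(Q) + B(ε · diam(S)) must have |Q| ≥ c/√ε. -/
open Metric Pointwise

noncomputable def arcPt (n k : ℕ) : EuclideanSpace ℝ (Fin 2) :=
  !₂[Real.cos (k / n), Real.sin (k / n)]

lemma arcPt_inner (n j k : ℕ) :
    inner ℝ (arcPt n j) (arcPt n k) = Real.cos ((k : ℝ) / n - j / n) := by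
  simp [arcPt, PiLp.inner_apply, Fin.sum_univ_two, Real.cos_sub]

lemma arcPt_norm (n k : ℕ) : ‖arcPt n k‖ = 1 := by
  have h := real_inner_self_eq_norm_sq (arcPt n k)
  rw [arcPt_inner, sub_self, Real.cos_zero] at h
  nlinarith [norm_nonneg (arcPt n k)]

lemma arcPt_inner_le (n j k : ℕ) (hj : j < n) (hk : k < n) (hjk : j ≠ k) :
    inner ℝ (arcPt n j) (arcPt n k) ≤ 1 - 1 / (5 * (n : ℝ) ^ 2) := by
  rw [arcPt_inner]
  have hn : (0 : ℝ) < n := by exact_mod_cast (by omega : 0 < n)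
  have hj' : (j : ℝ) < n := by exact_mod_cast hj
  have hk' : (k : ℝ) < n := by exact_mod_cast hk
  have hj0 : (0 : ℝ) ≤ j := Nat.cast_nonneg j
  have hk0 : (0 : ℝ) ≤ k := Nat.cast_nonneg k
  rw [← sub_div]
  have habs : |((k : ℝ) - j) / n| ≤ 1 := by
    rw [abs_div, abs_of_pos hn, div_le_one hn, abs_le]
    constructor <;> linarith
  have h1 := Real.cos_le_one_sub_mul_cos_sq (habs.trans (by linarith [Real.pi_gt_three]))
  have hpi : 1 / 5 ≤ 2 / Real.pi ^ 2 := by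
    rw [div_le_div_iff₀ (by norm_num) (by positivity)]
    nlinarith [Real.pi_lt_d2, Real.pi_pos]
  have hd : (1 : ℝ) ≤ ((k : ℝ) - j) ^ 2 := by
    have : (1 : ℤ) ≤ ((k : ℤ) - j) ^ 2 := by
      have : (0 : ℤ) < ((k : ℤ) - j) ^ 2 := by
        have : (k : ℤ) - j ≠ 0 := by omega
        positivity
      omega
    exact_mod_cast this
  have h2 : 1 / (n : ℝ) ^ 2 ≤ (((k : ℝ) - j) / n) ^ 2 := by
    rw [div_pow]; gcongr
  have h3 : 1 / 5 * (1 / (n : ℝ) ^ 2) ≤ 2 / Real.pi ^ 2 * (((k : ℝ) - j) / n) ^ 2 := by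
    gcongr
  have h4 : 1 / (5 * (n : ℝ) ^ 2) = 1 / 5 * (1 / (n : ℝ) ^ 2) := by field_simp
  linarith

lemma arcPt_inj (n j k : ℕ) (hj : j < n) (hk : k < n) (h : arcPt n j = arcPt n k) : j = k := by
  by_contra hjk
  have h1 := arcPt_inner_le n j k hj hk hjk
  rw [h, arcPt_inner, sub_self, Real.cos_zero] at h1
  have hn : (0 : ℝ) < n := by exact_mod_cast (by omega : 0 < n)
  have : 0 < 1 / (5 * (n : ℝ) ^ 2) := by positivity
  linarith

/-- Tightness of the convex polygon approximation lemma: there are constants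
`c > 0` and `ε₀ > 0` such that for every `0 < ε < ε₀` there is a nonempty
finite planar point set `S` for which any subset `Q ⊆ S` with
`conv S ⊆ conv Q + B(ε · diam S)` has at least `c/√ε` points. -/
theorem convex_polygon_approximation_tight :
    ∃ c : ℝ, 0 < c ∧ ∃ ε₀ : ℝ, 0 < ε₀ ∧ ∀ ε : ℝ, 0 < ε → ε < ε₀ →
      ∃ S : Finset (EuclideanSpace ℝ (Fin 2)), S.Nonempty ∧
        ∀ Q : Finset (EuclideanSpace ℝ (Fin 2)), Q ⊆ S →
          convexHull ℝ (S : Set (EuclideanSpace ℝ (Fin 2))) ⊆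
            convexHull ℝ (Q : Set (EuclideanSpace ℝ (Fin 2))) +
              (closedBall (0 : EuclideanSpace ℝ (Fin 2))
                (ε * diam (S : Set (EuclideanSpace ℝ (Fin 2))))) →
          c / Real.sqrt ε ≤ (Q.card : ℝ) := by
  refine ⟨1 / 8, by norm_num, 1 / 16, by norm_num, fun ε hε hε1 => ?_⟩
  have hs : 0 < Real.sqrt ε := Real.sqrt_pos.2 hε
  have hsq : Real.sqrt ε ^ 2 = ε := Real.sq_sqrt hε.le
  have hs4 : Real.sqrt ε < 1 / 4 := by nlinarith
  obtain ⟨n, hn⟩ : ∃ n : ℕ, n = ⌊1 / (4 * Real.sqrt ε)⌋₊ := ⟨_, rfl⟩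
  have hle : (n : ℝ) ≤ 1 / (4 * Real.sqrt ε) := hn ▸ Nat.floor_le (by positivity)
  have hlt : 1 / (4 * Real.sqrt ε) < n + 1 := hn ▸ Nat.lt_floor_add_one _
  have hn1 : 1 ≤ n := by
    rw [hn, Nat.one_le_floor_iff, le_div_iff₀ (by positivity)]
    linarith
  have hn1' : (1 : ℝ) ≤ n := by exact_mod_cast hn1
  have hc : 1 / 8 / Real.sqrt ε ≤ n := by
    have : 1 / 8 / Real.sqrt ε = 1 / (4 * Real.sqrt ε) / 2 := by field_simp; norm_num
    linarith
  have hεn : 2 * ε < 1 / (5 * (n : ℝ) ^ 2) := by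
    rw [le_div_iff₀ (by positivity)] at hle
    rw [lt_div_iff₀ (by positivity)]
    have h1 : ((n : ℝ) * (4 * Real.sqrt ε)) ^ 2 ≤ 1 := by
      have : 0 ≤ (n : ℝ) * (4 * Real.sqrt ε) := by positivity
      nlinarith
    have h2 : ((n : ℝ) * (4 * Real.sqrt ε)) ^ 2 = 16 * (n ^ 2 * ε) := by
      rw [mul_pow, mul_pow, hsq]; ring
    nlinarith
  classical
  let S : Finset (EuclideanSpace ℝ (Fin 2)) := (Finset.range n).image (arcPt n)
  have hcard : S.card = n := by
    rw [Finset.card_image_of_injOn, Finset.card_range]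
    intro j hj k hk h
    exact arcPt_inj n j k (by simpa using hj) (by simpa using hk) h
  have hdiam : diam (S : Set (EuclideanSpace ℝ (Fin 2))) ≤ 2 := by
    refine diam_le_of_forall_dist_le (by norm_num) ?_
    intro x hx y hy
    simp only [S, Finset.coe_image, Set.mem_image] at hx hy
    obtain ⟨j, -, rfl⟩ := hx
    obtain ⟨k, -, rfl⟩ := hy
    rw [dist_eq_norm]
    have := norm_sub_le (arcPt n j) (arcPt n k)
    rw [arcPt_norm, arcPt_norm] at this
    linarith
  refine ⟨S, ⟨arcPt n 0, Finset.mem_image_of_mem _ (by simp; omega)⟩, fun Q hQ hsub => ?_⟩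
  have hSQ : S ⊆ Q := by
    intro p hp
    by_contra hpQ
    obtain ⟨k, hk, rfl⟩ := Finset.mem_image.1 hp
    obtain ⟨x, hx, b, hb, hxb⟩ := hsub (subset_convexHull ℝ _ (Finset.mem_coe.2 hp))
    have hconv : Convex ℝ {x : EuclideanSpace ℝ (Fin 2) |
        innerSL ℝ (arcPt n k) x ≤ 1 - 1 / (5 * (n : ℝ) ^ 2)} :=
      convex_halfSpace_le (innerSL ℝ (arcPt n k)).toLinearMap.isLinear _
    have hx' := convexHull_min (fun q hq => by
      obtain ⟨j, hj, rfl⟩ := Finset.mem_image.1 (hQ hq)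
      refine arcPt_inner_le n k j (Finset.mem_range.1 hk) (Finset.mem_range.1 hj) ?_
      rintro rfl
      exact hpQ hq) hconv hx
    have hx2 : inner ℝ (arcPt n k) x ≤ 1 - 1 / (5 * (n : ℝ) ^ 2) := hx'
    have hb1 : ‖b‖ ≤ 2 * ε := by
      have := mem_closedBall_zero_iff.1 hb
      nlinarith
    have hb2 := real_inner_le_norm (arcPt n k) b
    rw [arcPt_norm, one_mul] at hb2
    have h1 : inner ℝ (arcPt n k) (arcPt n k) = (1 : ℝ) := by
      rw [arcPt_inner, sub_self, Real.cos_zero]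
    have h2 : inner ℝ (arcPt n k) (x + b) = (1 : ℝ) := by
      rw [← h1]; exact congrArg _ hxb
    rw [inner_add_right] at h2
    linarith
  have := Finset.card_le_card hSQ
  rw [hcard] at this
  exact hc.trans (by exact_mod_cast this)
end

section
/- Perimeter of an outer parallel body in the plane: let K be a nonempty compact convex subset of ℝ² with nonempty interior, and let r ≥ 0. Then the perimeter of the Minkowski sum K + B(r) equals the perimeter of K plus 2πr, where the perimeter of a planar convex body is the one-dimensional Hausdorff measure of its topological boundary: ℋ¹(∂(K + B(r))) = ℋ¹(∂K) + 2πr. -/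
open Metric Pointwise MeasureTheory
namespace PAB

abbrev E2 := EuclideanSpace ℝ (Fin 2)

/-- `u` is a unit outer normal of `C` at `x` -/
def Nrm (C : Set E2) (x u : E2) : Prop :=
  x ∈ C ∧ ‖u‖ = 1 ∧ ∀ y ∈ C, inner ℝ u y ≤ inner ℝ u x

lemma Nrm.not_interior {C : Set E2} {x u : E2} (h : Nrm C x u) : x ∉ interior C := by
  intro hx
  obtain ⟨ε, hε, hb⟩ := Metric.isOpen_iff.1 isOpen_interior x hx
  have h1 : x + (ε/2) • u ∈ C := by
    apply interior_subset
    apply hb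
    simp [norm_smul, h.2.1, abs_of_pos hε]
    linarith
  have h2 := h.2.2 _ h1
  rw [inner_add_right, real_inner_smul_right, real_inner_self_eq_norm_sq, h.2.1] at h2
  linarith

lemma mem_frontier_iff {C : Set E2} (hc : IsClosed C) (hv : Convex ℝ C)
    (hi : (interior C).Nonempty) (x : E2) : x ∈ frontier C ↔ ∃ u, Nrm C x u := by
  constructor
  · intro hx
    have hxC : x ∈ C := hc.frontier_subset hx
    have hxi : x ∉ interior C := hx.2
    obtain ⟨f, hf⟩ := geometric_hahn_banach_open_point hv.interior isOpen_interior hxi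
    have hle : ∀ y ∈ C, f y ≤ f x := by
      intro y hy
      have : y ∈ closure (interior C) := by
        rw [hv.closure_interior_eq_closure_of_nonempty_interior hi]
        exact subset_closure hy
      have hcl : closure (interior C) ⊆ {y | f y ≤ f x} :=
        closure_minimal (fun a ha => (hf a ha).le) (isClosed_le f.continuous continuous_const)
      exact hcl this
    set v := (InnerProductSpace.toDual ℝ E2).symm f with hvdef
    have hfv : ∀ y, inner ℝ v y = f y := fun y => by
      rw [hvdef, InnerProductSpace.toDual_symm_apply]
    have hv0 : v ≠ 0 := by
      intro h0
      obtain ⟨a, ha⟩ := hi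
      have := hf a ha
      rw [← hfv, ← hfv, h0] at this
      simp at this
    refine ⟨‖v‖⁻¹ • v, hxC, norm_smul_inv_norm (𝕜 := ℝ) hv0, fun y hy => ?_⟩
    rw [real_inner_smul_left, real_inner_smul_left, hfv, hfv]
    exact mul_le_mul_of_nonneg_left (hle y hy) (by positivity)
  · rintro ⟨u, h⟩
    exact ⟨subset_closure h.1, h.not_interior⟩

lemma exists_frontier_ray {L : Set E2} (hL : IsCompact L) {x u : E2} (hx : x ∈ L)
    (hu : ‖u‖ = 1) : ∃ t : ℝ, 0 ≤ t ∧ x + t • u ∈ frontier L := by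
  obtain ⟨R, hR⟩ := hL.isBounded.subset_closedBall x
  have hR0 : 0 ≤ R := by
    have := hR hx
    simpa using this
  have hc : IsPreconnected ((fun t : ℝ => x + t • u) '' Set.Icc 0 (R+1)) :=
    isPreconnected_Icc.image _ (by fun_prop)
  by_contra hcon
  push Not at hcon
  have hnf : ∀ z ∈ (fun t : ℝ => x + t • u) '' Set.Icc 0 (R+1), z ∉ frontier L := by
    rintro _ ⟨t, ht, rfl⟩
    exact hcon t ht.1
  have hin : ∀ z ∈ (fun t : ℝ => x + t • u) '' Set.Icc 0 (R+1), z ∈ L → z ∈ interior L := by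
    intro z hz hzL
    by_contra h
    exact hnf z hz ⟨subset_closure hzL, h⟩
  have hx0 : x ∈ (fun t : ℝ => x + t • u) '' Set.Icc 0 (R+1) :=
    ⟨0, ⟨by simp, by linarith⟩, by simp⟩
  obtain ⟨z, -, hz1, hz2⟩ := hc (interior L) Lᶜ isOpen_interior hL.isClosed.isOpen_compl
    (fun z hz => by
      by_cases h : z ∈ L
      · exact Or.inl (hin z hz h)
      · exact Or.inr h)
    ⟨x, hx0, hin x hx0 hx⟩
    ⟨x + (R+1) • u, ⟨R+1, ⟨by linarith, le_rfl⟩, rfl⟩, fun h => by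
      have := hR h
      simp [norm_smul, hu, abs_of_nonneg (by linarith : 0 ≤ R + 1)] at this
      linarith⟩
  exact hz2 (interior_subset hz1)

lemma perim_mono {K L : Set E2} (hK : IsClosed K) (hv : Convex ℝ K)
    (hi : (interior K).Nonempty) (hL : IsCompact L) (hKL : K ⊆ L) :
    μH[1] (frontier K) ≤ μH[1] (frontier L) := by
  have key : ∀ x : frontier K, ∃ z : E2, z ∈ frontier L ∧ ∃ t : ℝ, 0 ≤ t ∧ ∃ u, Nrm K x u ∧
      z = x + t • u := by
    rintro ⟨x, hx⟩
    obtain ⟨u, hu⟩ := (mem_frontier_iff hK hv hi x).1 hx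
    obtain ⟨t, ht, h⟩ := exists_frontier_ray hL (hKL hu.1) hu.2.1
    exact ⟨_, h, t, ht, u, hu, rfl⟩
  choose g hg t ht u hu hgu using key
  have hanti : AntilipschitzWith 1 g := by
    apply AntilipschitzWith.of_le_mul_dist
    intro x y
    rw [NNReal.coe_one, one_mul, Subtype.dist_eq, dist_eq_norm, dist_eq_norm]
    have h1 := (hu x).2.2 y (hu y).1
    have h2 := (hu y).2.2 x (hu x).1
    have h3 : ‖(x : E2) - y‖ ^ 2 ≤ inner ℝ (g x - g y) ((x : E2) - y) := by
      rw [hgu x, hgu y, add_sub_add_comm, inner_add_left, real_inner_self_eq_norm_sq,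
        inner_sub_left, real_inner_smul_left, real_inner_smul_left, inner_sub_right,
        inner_sub_right]
      nlinarith [ht x, ht y]
    have h4 := real_inner_le_norm (g x - g y) ((x : E2) - y)
    rcases eq_or_lt_of_le (norm_nonneg ((x : E2) - y)) with h | h
    · rw [← h]; positivity
    · nlinarith
  have h1 := hanti.le_hausdorffMeasure_image (d := 1) zero_le_one Set.univ
  have h2 := (isometry_subtype_coe (s := frontier K)).hausdorffMeasure_image (d := 1)
    (Or.inl zero_le_one) Set.univ
  rw [Set.image_univ, Subtype.range_coe] at h2
  rw [h2]
  refine h1.trans ?_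
  simp only [ENNReal.coe_one, ENNReal.one_rpow, one_mul]
  apply measure_mono
  rintro _ ⟨x, -, rfl⟩
  exact hg x

/-- dimension two -/
lemma eq_or_neg {u w v : E2} (hu : ‖u‖ = 1) (hw : ‖w‖ = 1) (hv : v ≠ 0)
    (h1 : inner ℝ u v = 0) (h2 : inner ℝ w v = 0) : u = w ∨ u = -w := by
  have e1 : u 0 ^ 2 + u 1 ^ 2 = 1 := by
    have := EuclideanSpace.real_norm_sq_eq u
    rw [hu] at this; simpa [Fin.sum_univ_two] using this.symm
  have e2 : w 0 ^ 2 + w 1 ^ 2 = 1 := by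
    have := EuclideanSpace.real_norm_sq_eq w
    rw [hw] at this; simpa [Fin.sum_univ_two] using this.symm
  have f1 : v 0 * u 0 + v 1 * u 1 = 0 := by
    simpa [PiLp.inner_apply, Fin.sum_univ_two, mul_comm] using h1
  have f2 : v 0 * w 0 + v 1 * w 1 = 0 := by
    simpa [PiLp.inner_apply, Fin.sum_univ_two, mul_comm] using h2
  have hdet : u 0 * w 1 - u 1 * w 0 = 0 := by
    by_contra hne
    apply hv
    have g0 : v 0 * (u 0 * w 1 - u 1 * w 0) = 0 := by linear_combination w 1 * f1 - u 1 * f2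
    have g1 : v 1 * (u 0 * w 1 - u 1 * w 0) = 0 := by linear_combination u 0 * f2 - w 0 * f1
    have g0' := (mul_eq_zero.1 g0).resolve_right hne
    have g1' := (mul_eq_zero.1 g1).resolve_right hne
    ext i; fin_cases i <;> simp [g0', g1']
  have hsq : (u 0 * w 0 + u 1 * w 1 - 1) * (u 0 * w 0 + u 1 * w 1 + 1) = 0 := by
    linear_combination e1 * (w 0 ^ 2 + w 1 ^ 2) + e2 - (u 0 * w 1 - u 1 * w 0) * hdet
  rcases mul_eq_zero.1 hsq with h | h
  · left
    have : (u 0 - w 0) ^ 2 + (u 1 - w 1) ^ 2 = 0 := by linear_combination e1 + e2 - 2 * h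
    have a0 : u 0 = w 0 := by nlinarith [sq_nonneg (u 0 - w 0), sq_nonneg (u 1 - w 1)]
    have a1 : u 1 = w 1 := by nlinarith [sq_nonneg (u 0 - w 0), sq_nonneg (u 1 - w 1)]
    ext i; fin_cases i <;> simp [a0, a1]
  · right
    have : (u 0 + w 0) ^ 2 + (u 1 + w 1) ^ 2 = 0 := by linear_combination e1 + e2 + 2 * h
    have a0 : u 0 = - w 0 := by nlinarith [sq_nonneg (u 0 + w 0), sq_nonneg (u 1 + w 1)]
    have a1 : u 1 = - w 1 := by nlinarith [sq_nonneg (u 0 + w 0), sq_nonneg (u 1 + w 1)]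
    ext i; fin_cases i <;> simp [a0, a1]

lemma finite_perp {v : E2} (hv : v ≠ 0) : {u : E2 | ‖u‖ = 1 ∧ inner ℝ u v = 0}.Finite := by
  rcases Set.eq_empty_or_nonempty {u : E2 | ‖u‖ = 1 ∧ inner ℝ u v = 0} with h | ⟨w, hw⟩
  · rw [h]; exact Set.finite_empty
  · refine (Set.toFinite {w, -w}).subset fun u hu => ?_
    simpa using eq_or_neg hu.1 hw.1 hv hu.2 hw.2

lemma measure_finite {s : Set E2} (hs : s.Finite) : μH[1] s = 0 := by
  have := Measure.nullSingletonClass_hausdorff E2 (d := 1) one_pos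
  exact hs.measure_zero _

lemma Nrm.unique {C : Set E2} {x y u v : E2} {r : ℝ} (hr : 0 < r) (h : Nrm C x u)
    (h' : Nrm C y v) (he : x + r • u = y + r • v) : x = y ∧ u = v := by
  have h1 := h.2.2 y h'.1
  have h2 := h'.2.2 x h.1
  have e : y - x = r • (u - v) := by
    rw [smul_sub, sub_eq_sub_iff_add_eq_add, add_comm (r • u), he]
  have h3 : inner ℝ u (y - x) ≤ 0 := by rw [inner_sub_right]; linarith
  rw [e, real_inner_smul_right, inner_sub_right, real_inner_self_eq_norm_sq, h.2.1] at h3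
  have h4 : 1 ≤ inner ℝ u v := by nlinarith
  have h5 : u = v := by
    have := inner_eq_one_iff_of_norm_eq_one (𝕜 := ℝ) h.2.1 h'.2.1
    apply this.1
    apply le_antisymm _ h4
    have := real_inner_le_norm u v
    rwa [h.2.1, h'.2.1, one_mul] at this
  subst h5
  exact ⟨by simpa using he, rfl⟩

lemma add_ball_props {K : Set E2} (hKc : IsCompact K) (hv : Convex ℝ K)
    (hi : (interior K).Nonempty) {r : ℝ} (hr : 0 ≤ r) :
    IsCompact (K + closedBall (0 : E2) r) ∧ Convex ℝ (K + closedBall (0 : E2) r) ∧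
    (interior (K + closedBall (0 : E2) r)).Nonempty := by
  refine ⟨hKc.add (isCompact_closedBall _ _), hv.add (convex_closedBall _ _), ?_⟩
  refine hi.mono (interior_mono fun x hx => ⟨x, hx, 0, by simpa using hr, by simp⟩)

lemma mem_frontier_add_iff {K : Set E2} (hKc : IsCompact K) (hv : Convex ℝ K)
    (hi : (interior K).Nonempty) {r : ℝ} (hr : 0 < r) (x : E2) :
    x ∈ frontier (K + closedBall (0 : E2) r) ↔ ∃ y u, Nrm K y u ∧ x = y + r • u := by
  obtain ⟨h1, h2, h3⟩ := add_ball_props hKc hv hi hr.le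
  rw [mem_frontier_iff h1.isClosed h2 h3]
  constructor
  · rintro ⟨u, ⟨p, hp, b, hb, rfl⟩, hu, hle⟩
    have hru : r • u ∈ closedBall (0 : E2) r := by simp [norm_smul, hu, abs_of_pos hr]
    have hb' : ‖b‖ ≤ r := by simpa using hb
    have key : ∀ q ∈ K, inner ℝ u q + r ≤ inner ℝ u p + inner ℝ u b := by
      intro q hq
      have := hle (q + r • u) ⟨q, hq, _, hru, rfl⟩
      simpa [inner_add_right, real_inner_smul_right, real_inner_self_eq_norm_sq, hu] using this
    have hub : inner ℝ u b ≤ ‖b‖ := by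
      have := real_inner_le_norm u b
      rwa [hu, one_mul] at this
    have h5 := key p hp
    have hbr : b = r • u := by
      rw [← sub_eq_zero, ← norm_eq_zero, ← sq_eq_zero_iff, norm_sub_sq_real,
        real_inner_smul_right, norm_smul, hu, real_inner_comm, Real.norm_of_nonneg hr.le]
      have : ‖b‖ = r := by linarith
      have : inner ℝ u b = r := by linarith
      simp [*]; ring
    exact ⟨p, u, ⟨hp, hu, fun q hq => by linarith [key q hq]⟩, by rw [hbr]⟩
  · rintro ⟨y, u, ⟨hy, hu, hle⟩, rfl⟩
    have hru : r • u ∈ closedBall (0 : E2) r := by simp [norm_smul, hu, abs_of_pos hr]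
    refine ⟨u, ⟨y, hy, _, hru, rfl⟩, hu, ?_⟩
    rintro _ ⟨q, hq, b, hb, rfl⟩
    have hb' : ‖b‖ ≤ r := by simpa using hb
    have hub : inner ℝ u b ≤ ‖b‖ := by
      have := real_inner_le_norm u b
      rwa [hu, one_mul] at this
    have := hle q hq
    simp only [inner_add_right, real_inner_smul_right, real_inner_self_eq_norm_sq, hu]
    linarith


lemma connected_ge {X : Type*} [MetricSpace X] [MeasurableSpace X] [BorelSpace X] {A : Set X}
    (hA : IsPreconnected A) {a b : X}
    (ha : a ∈ A) (hb : b ∈ A) : ENNReal.ofReal (dist a b) ≤ μH[1] A := by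
  have h1 := (LipschitzWith.dist_right a).hausdorffMeasure_image_le (d := 1) zero_le_one A
  simp only [ENNReal.coe_one, ENNReal.one_rpow, one_mul] at h1
  refine le_trans ?_ h1
  rw [hausdorffMeasure_real]
  have hc : IsPreconnected (dist a '' A) := hA.image _ (by fun_prop)
  have := hc.Icc_subset (a := 0) (b := dist a b) ⟨a, ha, dist_self a⟩ ⟨b, hb, rfl⟩
  calc ENNReal.ofReal (dist a b) = volume (Set.Icc 0 (dist a b)) := by simp
    _ ≤ _ := measure_mono this

noncomputable def ee (t : ℝ) : ℂ := Complex.exp (Complex.I * t)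

lemma ee_dist (a b : ℝ) : dist (ee a) (ee b) = 2 * |Real.sin ((a - b) / 2)| := by
  have h : ee a - ee b = ee b * (Complex.exp (Complex.I * ((a - b : ℝ) : ℂ)) - 1) := by
    unfold ee
    rw [mul_sub, ← Complex.exp_add]
    push_cast; ring_nf
  have hn : ‖ee b‖ = 1 := by
    unfold ee; rw [mul_comm]; exact Complex.norm_exp_ofReal_mul_I b
  rw [dist_eq_norm, h, norm_mul, hn, Complex.norm_exp_I_mul_ofReal_sub_one]
  simp

lemma ee_continuous : Continuous ee := by unfold ee; fun_prop

lemma ee_lip : LipschitzWith 1 ee := by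
  apply LipschitzWith.of_dist_le_mul
  intro a b
  rw [ee_dist, Real.dist_eq, NNReal.coe_one, one_mul]
  have := Real.abs_sin_le_abs (x := (a - b) / 2)
  rw [abs_div, abs_of_pos (two_pos : (0:ℝ) < 2)] at this
  linarith

lemma ee_inj : Set.InjOn ee (Set.Ico 0 (2 * Real.pi)) := by
  intro a ha b hb h
  apply Circle.exp_injOn_Ico (a := 0) (b := 2 * Real.pi) (by simp) ha hb
  ext
  simpa [ee, mul_comm] using h

lemma ee_image : ee '' Set.Ico 0 (2 * Real.pi) = sphere (0 : ℂ) 1 := by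
  ext z
  constructor
  · rintro ⟨t, -, rfl⟩
    simp [ee, mul_comm Complex.I, Complex.norm_exp_ofReal_mul_I]
  · intro hz
    have hz' : ‖z‖ = 1 := by simpa using hz
    have h0 : z = ee z.arg := by
      have := Complex.norm_mul_exp_arg_mul_I z
      rw [hz'] at this
      simpa [ee, mul_comm] using this.symm
    rcases le_or_gt 0 z.arg with h | h
    · exact ⟨z.arg, ⟨h, by linarith [Complex.arg_le_pi z, Real.pi_pos]⟩, h0.symm⟩
    · refine ⟨z.arg + 2 * Real.pi, ⟨by linarith [Complex.neg_pi_lt_arg z], by linarith⟩, ?_⟩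
      have : ee (z.arg + 2 * Real.pi) = ee z.arg := by
        unfold ee
        push_cast
        rw [mul_add, Complex.exp_add]
        have : Complex.exp (Complex.I * (2 * Real.pi)) = 1 := by
          rw [mul_comm]; exact Complex.exp_two_pi_mul_I
        rw [this, mul_one]
      rw [this, ← h0]

lemma sphere_lower (n : ℕ) (hn : 2 ≤ n) :
    ENNReal.ofReal (2 * n * Real.sin (Real.pi / n)) ≤ μH[1] (sphere (0 : ℂ) 1) := by
  have hn0 : (0:ℝ) < n := by positivity
  set a : ℕ → ℝ := fun k => k * (2 * Real.pi / n) with ha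
  have hmono : Monotone a := by
    intro i j hij
    have : (i:ℝ) ≤ j := by exact_mod_cast hij
    simp only [ha]
    have := Real.pi_pos
    gcongr
  have han : a n = 2 * Real.pi := by simp only [ha]; field_simp
  have ha0 : a 0 = 0 := by simp [ha]
  set B : ℕ → Set ℂ := fun k => (ee '' Set.Icc (a k) (a (k+1))) \ {ee (a (k+1))} with hB
  have hBsub : ∀ k, B k ⊆ ee '' Set.Ico (a k) (a (k+1)) := by
    rintro k _ ⟨⟨t, ht, rfl⟩, hne⟩
    refine ⟨t, ⟨ht.1, lt_of_le_of_ne ht.2 ?_⟩, rfl⟩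
    rintro rfl
    exact hne rfl
  have hIco : ∀ k ∈ Finset.range n, Set.Ico (a k) (a (k+1)) ⊆ Set.Ico 0 (2 * Real.pi) := by
    intro k hk
    rw [← han, ← ha0]
    exact Set.Ico_subset_Ico (hmono (Nat.zero_le _)) (hmono (Finset.mem_range.1 hk))
  have hmeas : ∀ k, MeasurableSet (B k) := fun k =>
    ((isCompact_Icc.image ee_continuous).isClosed.measurableSet).diff (measurableSet_singleton _)
  have hdisj : (↑(Finset.range n) : Set ℕ).PairwiseDisjoint B := by
    intro i hi j hj hij
    refine Set.disjoint_left.2 fun z hz hz' => ?_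
    obtain ⟨s, hs, rfl⟩ := hBsub i hz
    obtain ⟨t, ht, hst⟩ := hBsub j hz'
    have := ee_inj (hIco j hj ht) (hIco i hi hs) hst
    subst this
    exact Set.disjoint_left.1 (hmono.pairwise_disjoint_on_Ico_succ hij) hs ht
  have hge : ∀ k, ENNReal.ofReal (2 * Real.sin (Real.pi / n)) ≤ μH[1] (B k) := by
    intro k
    have := Measure.nullSingletonClass_hausdorff ℂ (d := 1) one_pos
    rw [hB, measure_sdiff_null (measure_singleton _)]
    have hle : a k ≤ a (k+1) := hmono (Nat.le_succ k)
    have h := connected_ge (isPreconnected_Icc.image ee ee_continuous.continuousOn)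
      (Set.mem_image_of_mem ee (Set.left_mem_Icc.2 hle))
      (Set.mem_image_of_mem ee (Set.right_mem_Icc.2 hle))
    refine le_trans ?_ h
    rw [ee_dist]
    apply ENNReal.ofReal_le_ofReal
    have : (a k - a (k+1)) / 2 = - (Real.pi / n) := by
      simp only [ha]; push_cast; ring
    rw [this, Real.sin_neg, abs_neg]
    have := le_abs_self (Real.sin (Real.pi / n))
    linarith
  calc ENNReal.ofReal (2 * n * Real.sin (Real.pi / n))
      = ∑ k ∈ Finset.range n, ENNReal.ofReal (2 * Real.sin (Real.pi / n)) := by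
        rw [Finset.sum_const, Finset.card_range, nsmul_eq_mul, ← ENNReal.ofReal_natCast,
          ← ENNReal.ofReal_mul hn0.le]
        ring_nf
    _ ≤ ∑ k ∈ Finset.range n, μH[1] (B k) := Finset.sum_le_sum fun k _ => hge k
    _ = μH[1] (⋃ k ∈ Finset.range n, B k) :=
        (measure_biUnion_finset hdisj fun k _ => hmeas k).symm
    _ ≤ _ := by
        apply measure_mono
        rw [← ee_image]
        refine Set.iUnion₂_subset fun k hk => (hBsub k).trans (Set.image_mono (hIco k hk))

lemma sphere_complex : μH[1] (sphere (0 : ℂ) 1) = ENNReal.ofReal (2 * Real.pi) := by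
  apply le_antisymm
  · rw [← ee_image]
    have := ee_lip.hausdorffMeasure_image_le (d := 1) zero_le_one (Set.Ico 0 (2 * Real.pi))
    simpa [hausdorffMeasure_real] using this
  · have h1 : Filter.Tendsto (fun n : ℕ => ENNReal.ofReal (2 * Real.pi * Real.sinc (Real.pi / n)))
        Filter.atTop (nhds (ENNReal.ofReal (2 * Real.pi * Real.sinc 0))) := by
      apply ENNReal.tendsto_ofReal
      apply Filter.Tendsto.const_mul
      exact (Real.continuous_sinc.tendsto 0).comp (tendsto_const_div_atTop_nhds_zero_nat Real.pi)
    rw [Real.sinc_zero, mul_one] at h1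
    refine le_of_tendsto h1 ?_
    filter_upwards [Filter.eventually_ge_atTop 2] with n hn
    refine le_trans (le_of_eq ?_) (sphere_lower n hn)
    congr 1
    have hn0 : (n:ℝ) ≠ 0 := by positivity
    rw [Real.sinc_of_ne_zero (by have := Real.pi_ne_zero; positivity)]
    field_simp

lemma sphere_E2 : μH[1] (sphere (0 : EuclideanSpace ℝ (Fin 2)) 1) =
    ENNReal.ofReal (2 * Real.pi) := by
  rw [← sphere_complex]
  have h := Complex.orthonormalBasisOneI.repr.toIsometryEquiv.hausdorffMeasure_image 1
    (sphere (0 : ℂ) 1)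
  rw [← h]
  congr 1
  rw [IsometryEquiv.image_sphere]
  simp

/-- the face in direction `u` -/
def Face (C : Set E2) (u : E2) : Set E2 := {x | Nrm C x u}

/-- unit normals at `x` -/
def NN (C : Set E2) (x : E2) : Set E2 := {u | Nrm C x u}

lemma face_closed {C : Set E2} (hC : IsClosed C) (u : E2) : IsClosed (Face C u) := by
  have : Face C u = C ∩ ({x | ‖u‖ = 1} ∩ ⋂ y ∈ C, {x | inner ℝ u y ≤ inner ℝ u x}) := by
    ext x; simp [Face, Nrm]; tauto
  rw [this]
  refine hC.inter (IsClosed.inter isClosed_const (isClosed_biInter fun y _ => ?_))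
  exact isClosed_le continuous_const (by fun_prop)

lemma nn_closed (C : Set E2) (x : E2) : IsClosed (NN C x) := by
  have : NN C x = {u | x ∈ C} ∩ ({u | ‖u‖ = 1} ∩
      ⋂ y ∈ C, {u | inner ℝ u y ≤ inner ℝ u x}) := by
    ext u; simp [NN, Nrm]
  rw [this]
  refine IsClosed.inter isClosed_const (IsClosed.inter ?_ (isClosed_biInter fun y _ => ?_))
  · exact isClosed_eq continuous_norm continuous_const
  · exact isClosed_le (by fun_prop) (by fun_prop)

/-- directions orthogonal to some edge -/
def Dirs (F : Finset E2) : Set E2 := {u | ∃ p ∈ F, ∃ q ∈ F, p ≠ q ∧ ‖u‖ = 1 ∧ inner ℝ u (p - q) = 0}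

lemma dirs_finite (F : Finset E2) : (Dirs F).Finite := by
  have : Dirs F ⊆ ⋃ p ∈ F, ⋃ q ∈ F, {u | p ≠ q ∧ ‖u‖ = 1 ∧ inner ℝ u (p - q) = 0} := by
    rintro u ⟨p, hp, q, hq, h⟩
    simp only [Set.mem_iUnion]
    exact ⟨p, hp, q, hq, h⟩
  refine Set.Finite.subset ?_ this
  refine F.finite_toSet.biUnion fun p _ => F.finite_toSet.biUnion fun q _ => ?_
  by_cases h : p = q
  · simp [h]
  · simpa [h] using finite_perp (sub_ne_zero.2 h)

lemma mem_dirs {F : Finset E2} {y u : E2} (h : Nrm (convexHull ℝ (F : Set E2)) y u)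
    (hy : y ∉ F) : u ∈ Dirs F := by
  by_contra hu
  obtain ⟨w, hw0, hw1, hwy⟩ := Finset.mem_convexHull'.1 h.1
  have hsum : ∑ q ∈ F, w q * (inner ℝ u y - inner ℝ u q) = 0 := by
    have h1 : inner ℝ u y = ∑ q ∈ F, w q * inner ℝ u q := by
      conv_lhs => rw [← hwy]
      rw [inner_sum]
      simp [real_inner_smul_right]
    simp only [mul_sub, Finset.sum_sub_distrib]
    rw [← Finset.sum_mul, hw1, ← h1]; ring
  have hz := (Finset.sum_eq_zero_iff_of_nonneg (fun q hq => mul_nonneg (hw0 q hq)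
    (sub_nonneg.2 (h.2.2 q (subset_convexHull ℝ _ hq))))).1 hsum
  have : ∃ p ∈ F, w p ≠ 0 := by
    by_contra hc
    push Not at hc
    rw [Finset.sum_eq_zero hc] at hw1
    exact zero_ne_one hw1
  obtain ⟨p, hp, hwp⟩ := this
  have hother : ∀ q ∈ F, q ≠ p → w q = 0 := by
    intro q hq hqp
    by_contra hwq
    apply hu
    have e1 := (mul_eq_zero.1 (hz p hp)).resolve_left hwp
    have e2 := (mul_eq_zero.1 (hz q hq)).resolve_left hwq
    exact ⟨q, hq, p, hp, hqp, h.2.1, by rw [inner_sub_right]; linarith⟩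
  have hwp1 : w p = 1 := by
    rw [← hw1]
    exact (Finset.sum_eq_single p hother (fun h => absurd hp h)).symm
  have : y = p := by
    rw [← hwy, Finset.sum_eq_single p (fun q hq hqp => by rw [hother q hq hqp, zero_smul])
      (fun h => absurd hp h), hwp1, one_smul]
  exact hy (this ▸ hp)

lemma exists_nn {F : Finset E2} (hF : F.Nonempty) {u : E2} (hu : ‖u‖ = 1) :
    ∃ p ∈ F, Nrm (convexHull ℝ (F : Set E2)) p u := by
  obtain ⟨p, hp, hmax⟩ := F.exists_max_image (fun q => inner ℝ u q) hF
  refine ⟨p, hp, subset_convexHull ℝ _ hp, hu, fun y hy => ?_⟩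
  have hconv : Convex ℝ {y : E2 | inner ℝ u y ≤ inner ℝ u p} :=
    convex_halfSpace_le (f := fun y => inner ℝ u y)
      ⟨fun a b => inner_add_right _ _ _, fun c a => real_inner_smul_right _ _ _⟩ _
  exact convexHull_min (fun q hq => hmax q hq) hconv hy

lemma polygon_perim (F : Finset E2) (hi : (interior (convexHull ℝ (F : Set E2))).Nonempty) :
    μH[1] (frontier (convexHull ℝ (F : Set E2))) =
      ∑ u ∈ (dirs_finite F).toFinset, μH[1] (Face (convexHull ℝ (F : Set E2)) u) := by
  set P := convexHull ℝ (F : Set E2) with hP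
  have hPc : IsClosed P := F.finite_toSet.isClosed_convexHull (𝕜 := ℝ)
  have hPv : Convex ℝ P := convex_convexHull ℝ _
  rw [← measure_biUnion_finset₀]
  · apply le_antisymm
    · have hsub : frontier P ⊆ (⋃ u ∈ (dirs_finite F).toFinset, Face P u) ∪ F := by
        intro x hx
        obtain ⟨u, hu⟩ := (mem_frontier_iff hPc hPv hi x).1 hx
        by_cases hxF : x ∈ F
        · exact Or.inr hxF
        · left
          simp only [Set.mem_iUnion]
          exact ⟨u, by simpa using mem_dirs hu hxF, hu⟩
      refine (measure_mono hsub).trans ((measure_union_le _ _).trans ?_)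
      rw [measure_finite F.finite_toSet, add_zero]
    · apply measure_mono
      refine Set.iUnion₂_subset fun u _ x hx => ?_
      exact (mem_frontier_iff hPc hPv hi x).2 ⟨u, hx⟩
  · intro u hu v hv huv
    refine measure_finite (Set.Subsingleton.finite ?_)
    rintro x ⟨hxu, hxv⟩ y ⟨hyu, hyv⟩
    by_contra hxy
    have e1 : inner ℝ u (x - y) = 0 := by
      rw [inner_sub_right]; linarith [hxu.2.2 y hyu.1, hyu.2.2 x hxu.1]
    have e2 : inner ℝ v (x - y) = 0 := by
      rw [inner_sub_right]; linarith [hxv.2.2 y hyv.1, hyv.2.2 x hxv.1]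
    rcases eq_or_neg hxu.2.1 hxv.2.1 (sub_ne_zero.2 hxy) e1 e2 with h | h
    · exact huv h
    · obtain ⟨a, ha⟩ := hi
      have haP : a ∈ P := interior_subset ha
      refine Nrm.not_interior (C := P) (x := a) (u := u) ⟨haP, hxu.2.1, fun z hz => ?_⟩ ha
      have h1 := hxu.2.2 z hz
      have h2 := hxv.2.2 a haP
      have hv' : v = -u := by rw [h, neg_neg]
      rw [hv', inner_neg_left, inner_neg_left] at h2
      linarith
  · intro u _
    exact (face_closed hPc u).measurableSet.nullMeasurableSet

lemma sum_nn (F : Finset E2) (hF : F.Nonempty) :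
    ∑ p ∈ F, μH[1] (NN (convexHull ℝ (F : Set E2)) p) = ENNReal.ofReal (2 * Real.pi) := by
  rw [← sphere_E2, ← measure_biUnion_finset₀]
  · congr 1
    ext u
    simp only [Set.mem_iUnion, mem_sphere_zero_iff_norm]
    constructor
    · rintro ⟨p, -, h⟩
      exact h.2.1
    · intro hu
      obtain ⟨p, hp, h⟩ := exists_nn hF hu
      exact ⟨p, hp, h⟩
  · intro p hp q hq hpq
    refine measure_finite ((dirs_finite F).subset ?_)
    rintro u ⟨h1, h2⟩
    refine ⟨p, hp, q, hq, hpq, h1.2.1, ?_⟩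
    rw [inner_sub_right]; linarith [h1.2.2 q h2.1, h2.2.2 p h1.1]
  · intro p _
    exact (nn_closed _ p).measurableSet.nullMeasurableSet

lemma measure_translate (a : E2) (s : Set E2) : μH[1] ((fun x => a + x) '' s) = μH[1] s :=
  (IsometryEquiv.addLeft a).hausdorffMeasure_image 1 s

lemma polygon_case (F : Finset E2) (hi : (interior (convexHull ℝ (F : Set E2))).Nonempty)
    {r : ℝ} (hr : 0 < r) :
    μH[1] (frontier (convexHull ℝ (F : Set E2) + closedBall (0 : E2) r)) =
      μH[1] (frontier (convexHull ℝ (F : Set E2))) + ENNReal.ofReal (2 * Real.pi * r) := by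
  have hF : F.Nonempty := by
    by_contra h
    rw [Finset.not_nonempty_iff_eq_empty] at h
    simp [h] at hi
  have hsum := sum_nn F hF
  rw [polygon_perim F hi]
  set P := convexHull ℝ (F : Set E2) with hP
  have hPk : IsCompact P := F.finite_toSet.isCompact_convexHull (𝕜 := ℝ)
  have hPc : IsClosed P := hPk.isClosed
  have hPv : Convex ℝ P := convex_convexHull ℝ _
  set D := (dirs_finite F).toFinset with hD
  set A : E2 → Set E2 := fun u => (fun x => r • u + x) '' Face P u with hA
  set B : E2 → Set E2 := fun p => (fun x => p + x) '' (r • NN P p) with hB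
  have hAm : ∀ u, NullMeasurableSet (A u) μH[1] := fun u =>
    ((IsometryEquiv.addLeft (r • u)).toHomeomorph.isClosedMap _
      (face_closed hPc u)).measurableSet.nullMeasurableSet
  have hBm : ∀ p, NullMeasurableSet (B p) μH[1] := fun p =>
    ((IsometryEquiv.addLeft p).toHomeomorph.isClosedMap _
      ((nn_closed P p).smul_of_ne_zero hr.ne')).measurableSet.nullMeasurableSet
  have hAmem : ∀ u x, x ∈ A u ↔ ∃ y, Nrm P y u ∧ x = y + r • u := by
    intro u x
    constructor
    · rintro ⟨y, hy, rfl⟩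
      exact ⟨y, hy, add_comm _ _⟩
    · rintro ⟨y, hy, rfl⟩
      exact ⟨y, hy, add_comm _ _⟩
  have hBmem : ∀ p x, x ∈ B p ↔ ∃ u, Nrm P p u ∧ x = p + r • u := by
    intro p x
    constructor
    · rintro ⟨_, ⟨u, hu, rfl⟩, rfl⟩
      exact ⟨u, hu, rfl⟩
    · rintro ⟨u, hu, rfl⟩
      exact ⟨_, ⟨u, hu, rfl⟩, rfl⟩
  have hfr : frontier (P + closedBall (0 : E2) r) = (⋃ u ∈ D, A u) ∪ ⋃ p ∈ F, B p := by
    ext x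
    rw [mem_frontier_add_iff hPk hPv hi hr]
    simp only [Set.mem_union, Set.mem_iUnion, exists_prop, hAmem, hBmem]
    constructor
    · rintro ⟨y, u, h, rfl⟩
      by_cases hy : y ∈ F
      · exact Or.inr ⟨y, hy, u, h, rfl⟩
      · exact Or.inl ⟨u, by simpa [hD] using mem_dirs h hy, y, h, rfl⟩
    · rintro (⟨u, -, y, h, rfl⟩ | ⟨y, -, u, h, rfl⟩) <;> exact ⟨y, u, h, rfl⟩
  have hmA : ∀ u, μH[1] (A u) = μH[1] (Face P u) := fun u => measure_translate _ _
  have hmB : ∀ p, μH[1] (B p) = ENNReal.ofReal r * μH[1] (NN P p) := by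
    intro p
    rw [hB, measure_translate, Measure.hausdorffMeasure_smul₀ zero_le_one hr.ne', NNReal.rpow_one,
      ENNReal.smul_def, smul_eq_mul]
    congr 1
    rw [Real.nnnorm_of_nonneg hr.le, ENNReal.ofReal, Real.toNNReal_of_nonneg hr.le]
  rw [hfr, measure_union₀, measure_biUnion_finset₀, measure_biUnion_finset₀]
  · simp only [hmA, hmB]
    rw [← Finset.mul_sum, hsum, ← ENNReal.ofReal_mul hr.le, mul_comm r]
  · intro p _ q _ hpq
    refine Disjoint.aedisjoint (Set.disjoint_left.2 fun x hx hx' => ?_)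
    obtain ⟨u, hu, rfl⟩ := (hBmem p x).1 hx
    obtain ⟨v, hv, e⟩ := (hBmem q _).1 hx'
    exact hpq (Nrm.unique hr hu hv e).1
  · exact fun p _ => hBm p
  · intro u _ v _ huv
    refine Disjoint.aedisjoint (Set.disjoint_left.2 fun x hx hx' => ?_)
    obtain ⟨p, hp, rfl⟩ := (hAmem u x).1 hx
    obtain ⟨q, hq, e⟩ := (hAmem v _).1 hx'
    exact huv (Nrm.unique hr hp hq e).2
  · exact fun u _ => hAm u
  · exact Finset.nullMeasurableSet_biUnion _ fun p _ => hBm p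
  · refine measure_finite (Set.Finite.subset (Set.Finite.image (fun z : E2 × E2 => z.1 + r • z.2)
      (F ×ˢ D).finite_toSet) ?_)
    rintro x ⟨h1, h2⟩
    simp only [Set.mem_iUnion, exists_prop] at h1 h2
    obtain ⟨u, hu, h1⟩ := h1
    obtain ⟨p, hp, h2⟩ := h2
    obtain ⟨y, hy, rfl⟩ := (hAmem u x).1 h1
    obtain ⟨v, hv, e⟩ := (hBmem p _).1 h2
    obtain ⟨rfl, rfl⟩ := Nrm.unique hr hy hv e
    exact ⟨(y, u), by simpa using ⟨hp, hu⟩, rfl⟩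

lemma exists_polygon {K U : Set E2} (hK : IsCompact K) (hU : IsOpen U) (hKU : K ⊆ U) :
    ∃ F : Finset E2, K ⊆ convexHull ℝ (F : Set E2) ∧ (F : Set E2) ⊆ U := by
  classical
  have h : ∀ x ∈ K, ∃ s : Finset E2, x ∈ interior (convexHull ℝ (s : Set E2)) ∧ (s : Set E2) ⊆ U := by
    intro x hx
    obtain ⟨b, hb1, hb2⟩ := exists_mem_interior_convexHull_affineBasis (hU.mem_nhds (hKU hx))
    refine ⟨Finset.univ.image b, by simpa using hb1, ?_⟩
    simpa using (subset_convexHull ℝ _).trans hb2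
  choose! s hs1 hs2 using h
  obtain ⟨t, ht, hcov⟩ := hK.elim_nhds_subcover (fun x => interior (convexHull ℝ (s x : Set E2)))
    fun x hx => isOpen_interior.mem_nhds (hs1 x hx)
  refine ⟨t.biUnion s, fun x hx => ?_, fun x hx => ?_⟩
  · obtain ⟨y, hy, hxy⟩ := Set.mem_iUnion₂.1 (hcov hx)
    refine convexHull_mono ?_ (interior_subset hxy)
    exact_mod_cast Finset.subset_biUnion_of_mem s hy
  · obtain ⟨y, hy, hxy⟩ := Finset.mem_biUnion.1 (Finset.mem_coe.1 hx)
    exact hs2 y (ht y hy) hxy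

lemma frontier_homothety (x : E2) {t : ℝ} (ht : 0 < t) (S : Set E2) :
    μH[1] (frontier (AffineMap.homothety x t '' S)) = ENNReal.ofReal t * μH[1] (frontier S) := by
  have h1 := (AffineEquiv.homothetyUnitsMulHom x
    (Units.mk0 t ht.ne')).toHomeomorphOfFiniteDimensional.image_frontier S
  have h2 : frontier (AffineMap.homothety x t '' S) = AffineMap.homothety x t '' frontier S :=
    h1.symm
  rw [h2, hausdorffMeasure_homothety_image zero_le_one x ht.ne', NNReal.rpow_one,
      ENNReal.smul_def, smul_eq_mul]
  congr 1
  simp [ENNReal.ofReal, Real.toNNReal_of_nonneg ht.le]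
  ext; simp [ht.le]

lemma main_bounds (K : Set E2) (hKc : IsCompact K) (hKconv : Convex ℝ K)
    (hKint : (interior K).Nonempty) (r : ℝ) (hr : 0 < r) (t : ℝ) (ht : 1 < t) :
    μH[1] (frontier (K + closedBall (0 : E2) r)) ≤
      ENNReal.ofReal t * μH[1] (frontier K) + ENNReal.ofReal (2 * Real.pi * r) ∧
    μH[1] (frontier K) + ENNReal.ofReal (2 * Real.pi * r) ≤
      ENNReal.ofReal t * μH[1] (frontier (K + closedBall (0 : E2) r)) := by
  obtain ⟨x, hx⟩ := hKint
  have ht0 : 0 < t := by linarith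
  set h := AffineMap.homothety x t with hh
  have hcont : Continuous h := AffineMap.homothety_continuous x t
  obtain ⟨F, hF1, hF2⟩ := exists_polygon hKc isOpen_interior
    (hKconv.subset_interior_image_homothety_of_one_lt hx t ht)
  have hF3 : convexHull ℝ (F : Set E2) ⊆ h '' K :=
    convexHull_min (hF2.trans interior_subset) (hKconv.affine_image h)
  have hKint : (interior K).Nonempty := ⟨x, hx⟩
  have hPi : (interior (convexHull ℝ (F : Set E2))).Nonempty := ⟨x, interior_mono hF1 hx⟩
  have hPk : IsCompact (convexHull ℝ (F : Set E2)) := F.finite_toSet.isCompact_convexHull (𝕜 := ℝ)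
  have hPv : Convex ℝ (convexHull ℝ (F : Set E2)) := convex_convexHull ℝ _
  have hpoly := polygon_case F hPi hr
  set P := convexHull ℝ (F : Set E2) with hP
  obtain ⟨k1, k2, k3⟩ := add_ball_props hKc hKconv hKint hr.le
  obtain ⟨p1, p2, p3⟩ := add_ball_props hPk hPv hPi hr.le
  have m1 := perim_mono hKc.isClosed hKconv hKint hPk hF1
  have m2 := perim_mono hPk.isClosed hPv hPi (hKc.image hcont) hF3
  have m3 := perim_mono k1.isClosed k2 k3 p1 (Set.add_subset_add_right hF1)
  have hsub : P + closedBall (0 : E2) r ⊆ h '' (K + closedBall (0 : E2) r) := by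
    rintro _ ⟨p, hp, b, hb, rfl⟩
    obtain ⟨k, hk, rfl⟩ := hF3 hp
    have hb' : ‖b‖ ≤ r := by simpa using hb
    refine ⟨k + t⁻¹ • b, ⟨k, hk, _, ?_, rfl⟩, ?_⟩
    · rw [mem_closedBall_zero_iff, norm_smul, Real.norm_of_nonneg (by positivity)]
      have : t⁻¹ ≤ 1 := inv_le_one_of_one_le₀ ht.le
      nlinarith [norm_nonneg b]
    · simp only [hh, AffineMap.homothety_apply, vsub_eq_sub, vadd_eq_add]
      rw [add_sub_right_comm, smul_add, smul_inv_smul₀ ht0.ne']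
      abel
  have m4 := perim_mono p1.isClosed p2 p3 (k1.image hcont) hsub
  rw [frontier_homothety x ht0] at m2 m4
  rw [hpoly] at m3 m4
  exact ⟨m3.trans (by gcongr), le_trans (by gcongr) m4⟩

lemma tendsto_aux (c : ENNReal) : Filter.Tendsto (fun t : ℝ => ENNReal.ofReal t * c)
    (nhdsWithin 1 (Set.Ioi 1)) (nhds c) := by
  have h : Filter.Tendsto (fun t : ℝ => ENNReal.ofReal t) (nhdsWithin 1 (Set.Ioi 1)) (nhds 1) := by
    have := (ENNReal.continuous_ofReal.tendsto 1).mono_left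
      (nhdsWithin_le_nhds (s := Set.Ioi (1:ℝ)))
    rwa [ENNReal.ofReal_one] at this
  have := ENNReal.Tendsto.mul_const (b := c) h (Or.inl one_ne_zero)
  rwa [one_mul] at this

end PAB

/-- Perimeter of an outer parallel body in the plane: for a compact convex body
`K ⊆ ℝ²` with nonempty interior and `r ≥ 0`, the perimeter of `K + B(r)` equals
the perimeter of `K` plus `2πr`. -/
theorem perimeter_add_closedBall
    (K : Set (EuclideanSpace ℝ (Fin 2))) (hK : K.Nonempty)
    (hKc : IsCompact K) (hKconv : Convex ℝ K)
    (hKint : (interior K).Nonempty) (r : ℝ) (hr : 0 ≤ r) :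
    μH[1] (frontier (K + closedBall (0 : EuclideanSpace ℝ (Fin 2)) r)) =
      μH[1] (frontier K) + ENNReal.ofReal (2 * Real.pi * r) := by
  rcases hr.eq_or_lt with rfl | hr
  · simp
  have hb := PAB.main_bounds K hKc hKconv hKint r hr
  apply le_antisymm
  · refine ge_of_tendsto ((PAB.tendsto_aux _).add_const _) ?_
    filter_upwards [self_mem_nhdsWithin] with t ht using (hb t ht).1
  · refine ge_of_tendsto (PAB.tendsto_aux _) ?_
    filter_upwards [self_mem_nhdsWithin] with t ht using (hb t ht).2
end

section
/- Diameter–perimeter inequality for planar convex bodies: if K is a nonempty compact convex subset of ℝ² with nonempty interior, then its perimeter is at most π times its diameter: ℋ¹(∂K) ≤ π · diam(K). -/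
open Metric MeasureTheory

namespace PerimAux

abbrev E2 := EuclideanSpace ℝ (Fin 2)

/-- component along the direction `θ` -/
noncomputable def U (θ : ℝ) (x : E2) : ℝ := Real.cos θ * x 0 + Real.sin θ * x 1
/-- component along the direction `θ + π/2` -/
noncomputable def T (θ : ℝ) (x : E2) : ℝ := -Real.sin θ * x 0 + Real.cos θ * x 1

lemma U_sub (θ : ℝ) (x y : E2) : U θ (x - y) = U θ x - U θ y := by simp [U]; ring
lemma T_sub (θ : ℝ) (x y : E2) : T θ (x - y) = T θ x - T θ y := by simp [T]; ring

lemma U_add (θ ψ : ℝ) (x : E2) : U (θ + ψ) x = Real.cos ψ * U θ x + Real.sin ψ * T θ x := by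
  simp only [U, T, Real.cos_add, Real.sin_add]; ring
lemma T_add (θ ψ : ℝ) (x : E2) : T (θ + ψ) x = -Real.sin ψ * U θ x + Real.cos ψ * T θ x := by
  simp only [U, T, Real.cos_add, Real.sin_add]; ring

lemma sq_norm (θ : ℝ) (x : E2) : ‖x‖ ^ 2 = U θ x ^ 2 + T θ x ^ 2 := by
  rw [EuclideanSpace.norm_sq_eq]
  simp only [Fin.sum_univ_two, Real.norm_eq_abs, sq_abs, U, T]
  linear_combination (-(x 0)^2 - (x 1)^2) * Real.sin_sq_add_cos_sq θ

lemma abs_U_le (θ : ℝ) (x : E2) : |U θ x| ≤ ‖x‖ := by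
  refine abs_le_of_sq_le_sq ?_ (norm_nonneg _)
  rw [sq_norm θ]; nlinarith [sq_nonneg (T θ x)]

lemma norm_le (θ : ℝ) (x : E2) : ‖x‖ ≤ |U θ x| + |T θ x| := by
  apply le_of_sq_le_sq _ (by positivity)
  rw [sq_norm θ, ← sq_abs (U θ x), ← sq_abs (T θ x)]
  nlinarith [mul_nonneg (abs_nonneg (U θ x)) (abs_nonneg (T θ x))]

/-- extreme support points, depending only on the direction vector -/
lemma exists_support (K : Set E2) (hK : K.Nonempty) (hKc : IsCompact K) (c s : ℝ) :
    ∃ a ∈ K, (∀ x ∈ K, c * x 0 + s * x 1 ≤ c * a 0 + s * a 1) ∧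
      (∀ x ∈ K, c * x 0 + s * x 1 = c * a 0 + s * a 1 →
        -s * x 0 + c * x 1 ≤ -s * a 0 + c * a 1) := by
  obtain ⟨b, hb, hbm⟩ := hKc.exists_isMaxOn hK
    (f := fun x : E2 => c * x 0 + s * x 1) (by fun_prop)
  have hcl : IsClosed {x : E2 | c * x 0 + s * x 1 = c * b 0 + s * b 1} :=
    isClosed_eq (by fun_prop) (by fun_prop)
  obtain ⟨a, ha, ham⟩ := (hKc.inter_right hcl).exists_isMaxOn ⟨b, hb, rfl⟩
    (f := fun x : E2 => -s * x 0 + c * x 1) (by fun_prop)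
  have ha2 : c * a 0 + s * a 1 = c * b 0 + s * b 1 := ha.2
  refine ⟨a, ha.1, fun x hx => ?_, fun x hx h => ?_⟩
  · rw [ha2]; exact hbm hx
  · exact ham ⟨hx, h.trans ha2⟩

/-- boundary points have a supporting direction -/
lemma exists_normal (K : Set E2) (hKc : IsCompact K) (hKconv : Convex ℝ K)
    (hKint : (interior K).Nonempty) (p : E2) (hp : p ∈ frontier K) :
    p ∈ K ∧ ∃ φ ∈ Set.Ioc (-Real.pi) Real.pi, ∀ x ∈ K, U φ x ≤ U φ p := by
  have hpK : p ∈ K := hKc.isClosed.frontier_subset hp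
  refine ⟨hpK, ?_⟩
  have hpi : p ∉ interior K := hp.2
  obtain ⟨f, hf⟩ := geometric_hahn_banach_open_point hKconv.interior isOpen_interior hpi
  have hle : ∀ x ∈ K, f x ≤ f p := by
    intro x hx
    have hx' : x ∈ closure (interior K) := by
      rw [hKconv.closure_interior_eq_closure_of_nonempty_interior hKint]; exact subset_closure hx
    exact closure_minimal (fun y hy => (hf y hy).le)
      (isClosed_le f.continuous continuous_const) hx'
  set c := f (EuclideanSpace.single 0 1) with hc
  set s := f (EuclideanSpace.single 1 1) with hs
  have hfx : ∀ x, f x = c * x 0 + s * x 1 := by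
    intro x
    have : x = x 0 • EuclideanSpace.single (0 : Fin 2) (1:ℝ) + x 1 • EuclideanSpace.single 1 1 := by
      ext i; fin_cases i <;> simp
    conv_lhs => rw [this]
    rw [map_add, map_smul, map_smul, smul_eq_mul, smul_eq_mul]; ring
  set z : ℂ := ⟨c, s⟩ with hz
  have hz0 : z ≠ 0 := by
    intro h0
    obtain ⟨y, hy⟩ := hKint
    have h1 := hf y hy
    have hc0 : c = 0 := congrArg Complex.re h0
    have hs0 : s = 0 := congrArg Complex.im h0
    rw [hfx, hfx, hc0, hs0] at h1
    simp at h1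
  have hr : 0 < ‖z‖ := norm_pos_iff.mpr hz0
  have hcr : c = ‖z‖ * Real.cos z.arg := (Complex.norm_mul_cos_arg z).symm
  have hsr : s = ‖z‖ * Real.sin z.arg := (Complex.norm_mul_sin_arg z).symm
  refine ⟨z.arg, Complex.arg_mem_Ioc z, fun x hx => ?_⟩
  have h := hle x hx
  have hU : ∀ x, f x = ‖z‖ * U z.arg x := by
    intro x; rw [hfx, U]; linear_combination x 0 * hcr + x 1 * hsr
  rw [hU, hU] at h
  exact le_of_mul_le_mul_left h hr

/-- points whose normal lies in a small sector -/
def F (K : Set E2) (θ δ : ℝ) : Set E2 :=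
  {p | p ∈ K ∧ ∃ ψ ∈ Set.Ioc 0 δ, ∀ x ∈ K, U (θ + ψ) x ≤ U (θ + ψ) p}

lemma tan_aux (δ ψ : ℝ) (hδ : δ < Real.pi / 2) (hψ : ψ ∈ Set.Ioc 0 δ) :
    0 < Real.cos ψ ∧ 0 < Real.sin ψ ∧ Real.sin ψ ≤ Real.tan δ * Real.cos ψ := by
  have h1 : 0 < Real.cos ψ := Real.cos_pos_of_mem_Ioo ⟨by linarith [hψ.1, Real.pi_pos], by linarith [hψ.2]⟩
  refine ⟨h1, Real.sin_pos_of_pos_of_lt_pi hψ.1 (by linarith [hψ.2, Real.pi_pos]), ?_⟩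
  rw [← div_le_iff₀ h1, ← Real.tan_eq_sin_div_cos]
  rcases hψ.2.eq_or_lt with h | h
  · rw [h]
  · exact (Real.tan_lt_tan_of_nonneg_of_lt_pi_div_two hψ.1.le hδ h).le

lemma antilip (K : Set E2) (θ δ : ℝ) (hδ : δ < Real.pi / 2)
    (p q : E2) (hp : p ∈ F K θ δ) (hq : q ∈ F K θ δ) :
    dist p q ≤ (1 + Real.tan δ) * |T θ p - T θ q| := by
  obtain ⟨hpK, ψ, hψ, h1⟩ := hp
  obtain ⟨hqK, χ, hχ, h2⟩ := hq
  have h1 := h1 q hqK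
  have h2 := h2 p hpK
  rw [← sub_nonneg, ← U_sub, U_add] at h1
  rw [← sub_nonpos, ← U_sub, U_add] at h2
  rw [dist_eq_norm, ← T_sub]
  obtain ⟨c1, s1, t1⟩ := tan_aux δ ψ hδ hψ
  obtain ⟨c2, s2, t2⟩ := tan_aux δ χ hδ hχ
  generalize p - q = d at *
  refine (norm_le θ d).trans ?_
  have key : |U θ d| ≤ Real.tan δ * |T θ d| := by
    generalize U θ d = α at *
    generalize T θ d = β at *
    generalize Real.tan δ = t at *
    rcases le_total 0 β with hβ | hβ
    · rw [abs_of_nonneg hβ, abs_le]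
      constructor
      · have : 0 ≤ Real.cos ψ * (α + t * β) := by nlinarith
        have := nonneg_of_mul_nonneg_right this c1
        linarith
      · have : Real.cos χ * α ≤ 0 := by nlinarith
        have : α ≤ 0 := nonpos_of_mul_nonpos_right this c2
        have ht : 0 ≤ t := by
          by_contra h; push Not at h; nlinarith
        nlinarith
    · rw [abs_of_nonpos hβ, abs_le]
      constructor
      · have : 0 ≤ Real.cos ψ * α := by nlinarith
        have : 0 ≤ α := nonneg_of_mul_nonneg_right this c1
        have ht : 0 ≤ t := by
          by_contra h; push Not at h; nlinarith
        nlinarith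
      · have : Real.cos χ * (α + t * β) ≤ 0 := by nlinarith
        have := nonpos_of_mul_nonpos_right this c2
        linarith
  linarith

lemma lower (θ ψ δ : ℝ) (hδ : δ < Real.pi / 2) (hψ : ψ ∈ Set.Ioc 0 δ) (p a : E2)
    (h1 : U θ p ≤ U θ a) (h2 : U (θ + ψ) a ≤ U (θ + ψ) p) : T θ a ≤ T θ p := by
  rw [← sub_nonneg, ← U_sub, U_add] at h2
  rw [← sub_nonpos, ← U_sub] at h1
  rw [← sub_nonneg, ← T_sub]
  obtain ⟨c1, s1, -⟩ := tan_aux δ ψ hδ hψ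
  have : 0 ≤ Real.sin ψ * T θ (p - a) := by nlinarith
  exact nonneg_of_mul_nonneg_right this s1

lemma upper (θ ψ δ : ℝ) (hδ : δ < Real.pi / 2) (hψ : ψ ∈ Set.Ioc 0 δ) (p a : E2)
    (h1 : U (θ + δ) p ≤ U (θ + δ) a) (h2 : U (θ + ψ) a ≤ U (θ + ψ) p)
    (h3 : U (θ + δ) p = U (θ + δ) a → T (θ + δ) p ≤ T (θ + δ) a) : T θ p ≤ T θ a := by
  have hδ0 : 0 < δ := hψ.1.trans_le hψ.2
  obtain ⟨c0, s0, -⟩ := tan_aux δ δ hδ ⟨hδ0, le_rfl⟩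
  have hα : 0 ≤ U (θ + δ) (a - p) := by rw [U_sub]; linarith
  have hβ : 0 ≤ T (θ + δ) (a - p) := by
    rcases hψ.2.eq_or_lt with h | h
    · subst h
      rw [T_sub]; linarith [h3 (le_antisymm h1 h2)]
    · obtain ⟨c1, s1, -⟩ := tan_aux δ (δ - ψ) hδ ⟨by linarith, by linarith [hψ.1]⟩
      have e : θ + ψ = θ + δ + -(δ - ψ) := by ring
      rw [← sub_nonpos, ← U_sub, e, U_add, Real.cos_neg, Real.sin_neg] at h2
      have : 0 ≤ Real.sin (δ - ψ) * T (θ + δ) (a - p) := by nlinarith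
      exact nonneg_of_mul_nonneg_right this s1
  have e : T θ (a - p) = Real.sin δ * U (θ + δ) (a - p) + Real.cos δ * T (θ + δ) (a - p) := by
    have := T_add (θ + δ) (-δ) (a - p)
    rw [Real.cos_neg, Real.sin_neg, add_neg_cancel_right] at this
    rw [this]; ring
  have : 0 ≤ T θ (a - p) := by rw [e]; positivity
  rw [T_sub] at this; linarith

lemma measure_F (K : Set E2) (θ δ : ℝ) (hδ0 : 0 < δ) (hδ : δ < Real.pi / 2) (l u : ℝ)
    (h : ∀ p ∈ F K θ δ, T θ p ∈ Set.Icc l u) :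
    μH[1] (F K θ δ) ≤ ENNReal.ofReal ((1 + Real.tan δ) * (u - l)) := by
  have ht : 0 ≤ Real.tan δ := (Real.tan_pos_of_pos_of_lt_pi_div_two hδ0 hδ).le
  have hinj : Set.InjOn (T θ) (F K θ δ) := by
    intro p hp q hq hpq
    have := antilip K θ δ hδ p q hp hq
    rw [hpq, sub_self, abs_zero, mul_zero] at this
    exact dist_le_zero.mp this
  have hL : LipschitzOnWith (Real.toNNReal (1 + Real.tan δ))
      (Function.invFunOn (T θ) (F K θ δ)) (T θ '' F K θ δ) := by
    apply LipschitzOnWith.of_dist_le_mul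
    rintro _ ⟨p, hp, rfl⟩ _ ⟨q, hq, rfl⟩
    rw [hinj.leftInvOn_invFunOn hp, hinj.leftInvOn_invFunOn hq, Real.coe_toNNReal _ (by linarith),
      Real.dist_eq]
    exact antilip K θ δ hδ p q hp hq
  have h1 := hL.hausdorffMeasure_image_le (d := 1) zero_le_one
  rw [hinj.leftInvOn_invFunOn.image_image, ENNReal.rpow_one, hausdorffMeasure_real] at h1
  refine h1.trans ?_
  rw [ENNReal.ofReal_mul (by linarith)]
  refine mul_le_mul' le_rfl ?_
  calc volume (T θ '' F K θ δ) ≤ volume (Set.Icc l u) :=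
        measure_mono (Set.image_subset_iff.mpr h)
    _ = _ := Real.volume_Icc

lemma main_n (K : Set E2) (hK : K.Nonempty)
    (hKc : IsCompact K) (hKconv : Convex ℝ K)
    (hKint : (interior K).Nonempty) (n : ℕ) (hn : 3 ≤ n) :
    μH[1] (frontier K) ≤
      ENNReal.ofReal ((1 + Real.tan (Real.pi / n)) * (Real.pi * diam K)) := by
  choose A hAK hA1 hA2 using exists_support K hK hKc
  have hn0 : (0:ℝ) < n := by exact_mod_cast (by omega : 0 < n)
  set δ : ℝ := Real.pi / n with hδdef
  have hδ0 : 0 < δ := div_pos Real.pi_pos hn0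
  have hnδ : n * δ = Real.pi := by rw [hδdef]; field_simp
  have hδ : δ < Real.pi / 2 := by
    have : (3:ℝ) ≤ n := by exact_mod_cast hn
    nlinarith
  set θ : ℕ → ℝ := fun k => -Real.pi + k * δ with hθ
  have hθs : ∀ k, θ (k+1) = θ k + δ := by intro k; simp only [hθ]; push_cast; ring
  have hθn : ∀ k, θ (n + k) = θ k + Real.pi := by
    intro k; simp only [hθ]; push_cast; linarith [hnδ]
  set a : ℕ → E2 := fun k => A (Real.cos (θ k)) (Real.sin (θ k)) with ha
  have haK : ∀ k, a k ∈ K := fun k => hAK _ _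
  have ha1 : ∀ k, ∀ x ∈ K, U (θ k) x ≤ U (θ k) (a k) := fun k => hA1 _ _
  have ha2 : ∀ k, ∀ x ∈ K, U (θ k) x = U (θ k) (a k) → T (θ k) x ≤ T (θ k) (a k) :=
    fun k => hA2 _ _
  have hcover : frontier K ⊆ ⋃ k ∈ Finset.range (n + n), F K (θ k) δ := by
    intro p hp
    obtain ⟨hpK, φ, hφ, hmax⟩ := exists_normal K hKc hKconv hKint p hp
    have hpos : 0 < (φ + Real.pi) / δ := div_pos (by linarith [hφ.1]) hδ0
    obtain ⟨k, hk⟩ : ∃ k, ⌈(φ + Real.pi) / δ⌉₊ = k + 1 :=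
      Nat.exists_eq_succ_of_ne_zero (Nat.ceil_pos.mpr hpos).ne'
    have hk1 : (k:ℝ) < (φ + Real.pi) / δ := Nat.lt_ceil.mp (by omega)
    have hk2 : (φ + Real.pi) / δ ≤ (k:ℝ) + 1 := by
      have := Nat.le_ceil ((φ + Real.pi) / δ); rw [hk] at this; exact_mod_cast this
    rw [lt_div_iff₀ hδ0] at hk1
    rw [div_le_iff₀ hδ0] at hk2
    have hkn : k < n + n := by
      have : (k:ℝ) * δ < (n + n) * δ := by nlinarith [hφ.2]
      exact_mod_cast lt_of_mul_lt_mul_right this hδ0.le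
    refine Set.mem_biUnion (Finset.mem_coe.mpr (Finset.mem_range.mpr hkn)) ⟨hpK, φ - θ k, ?_, ?_⟩
    · simp only [hθ]; constructor <;> linarith
    · rw [add_sub_cancel]; exact hmax
  have hF : ∀ k, μH[1] (F K (θ k) δ) ≤
      ENNReal.ofReal ((1 + Real.tan δ) * (T (θ k) (a (k+1)) - T (θ k) (a k))) := by
    intro k
    apply measure_F K _ δ hδ0 hδ
    rintro p ⟨hpK, ψ, hψ, hm⟩
    refine ⟨lower _ ψ δ hδ hψ _ _ (ha1 k p hpK) (hm _ (haK k)), upper _ ψ δ hδ hψ _ _ ?_ (hm _ (haK _)) ?_⟩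
    · rw [← hθs]; exact ha1 _ _ hpK
    · rw [← hθs]; exact ha2 _ _ hpK
  have ht : 0 ≤ Real.tan δ := (Real.tan_pos_of_pos_of_lt_pi_div_two hδ0 hδ).le
  have hnn : ∀ k, 0 ≤ T (θ k) (a (k+1)) - T (θ k) (a k) := by
    intro k
    rw [sub_nonneg]
    refine lower _ δ δ hδ ⟨hδ0, le_rfl⟩ _ _ (ha1 k _ (haK _)) ?_
    rw [← hθs]; exact ha1 _ _ (haK _)
  have hsum : ∑ k ∈ Finset.range (n + n), (T (θ k) (a (k+1)) - T (θ k) (a k)) ≤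
      Real.pi * diam K := by
    have htel := Finset.sum_range_sub (fun k => T (θ k) (a k)) (n + n)
    have hper : T (θ (n + n)) (a (n + n)) = T (θ 0) (a 0) := by
      have e : θ (n + n) = θ 0 + 2 * Real.pi := by
        have := hθn 0
        rw [hθn n]; rw [add_zero] at this; rw [this]; ring
      simp only [ha, T, e, Real.cos_add_two_pi, Real.sin_add_two_pi]
    have hg : ∀ k, T (θ k) (a (k+1)) - T (θ k) (a k) =
        2 * Real.sin (δ / 2) * U (θ k + δ / 2) (a (k+1)) +
          (T (θ (k+1)) (a (k+1)) - T (θ k) (a k)) := by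
      intro k
      have e1 : θ k = θ k + δ / 2 + -(δ/2) := by ring
      have e2 : θ (k+1) = θ k + δ / 2 + δ/2 := by rw [hθs]; ring
      have h1 := T_add (θ k + δ/2) (-(δ/2)) (a (k+1))
      have h2 := T_add (θ k + δ/2) (δ/2) (a (k+1))
      rw [← e1, Real.cos_neg, Real.sin_neg] at h1
      rw [← e2] at h2
      linear_combination h1 - h2
    rw [Finset.sum_congr rfl fun k _ => hg k, Finset.sum_add_distrib, htel, hper, sub_self,
      add_zero, Finset.sum_range_add, ← Finset.sum_add_distrib]
    calc _ ≤ ∑ k ∈ Finset.range n, δ * diam K := by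
          apply Finset.sum_le_sum
          intro k _
          have e : θ (n + k) + δ / 2 = θ k + δ / 2 + Real.pi := by rw [hθn]; ring
          rw [e, U_add _ Real.pi, Real.cos_pi, Real.sin_pi]
          have hd : U (θ k + δ/2) (a (k+1)) - U (θ k + δ/2) (a (n+k+1)) ≤ diam K := by
            rw [← U_sub]
            refine (le_abs_self _).trans ((abs_U_le _ _).trans ?_)
            rw [← dist_eq_norm]
            exact dist_le_diam_of_mem hKc.isBounded (haK _) (haK _)
          have hs1 : Real.sin (δ/2) ≤ δ/2 := Real.sin_le (by linarith)
          have hs0 : 0 ≤ Real.sin (δ/2) :=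
            Real.sin_nonneg_of_nonneg_of_le_pi (by linarith) (by linarith)
          have hdn : 0 ≤ diam K := diam_nonneg
          nlinarith
      _ = Real.pi * diam K := by
          rw [Finset.sum_const, Finset.card_range, nsmul_eq_mul, ← mul_assoc, hnδ]
  calc μH[1] (frontier K) ≤ ∑ k ∈ Finset.range (n + n), μH[1] (F K (θ k) δ) :=
        (measure_mono hcover).trans (measure_biUnion_finset_le _ _)
    _ ≤ ∑ k ∈ Finset.range (n + n),
        ENNReal.ofReal ((1 + Real.tan δ) * (T (θ k) (a (k+1)) - T (θ k) (a k))) :=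
        Finset.sum_le_sum fun k _ => hF k
    _ = ENNReal.ofReal ((1 + Real.tan δ) *
        ∑ k ∈ Finset.range (n + n), (T (θ k) (a (k+1)) - T (θ k) (a k))) := by
        rw [Finset.mul_sum, ENNReal.ofReal_sum_of_nonneg]
        intro k _
        exact mul_nonneg (by linarith) (hnn k)
    _ ≤ _ := ENNReal.ofReal_le_ofReal (mul_le_mul_of_nonneg_left hsum (by linarith))

end PerimAux

/-- Diameter–perimeter inequality for planar convex bodies: the perimeter of a
compact convex body `K ⊆ ℝ²` with nonempty interior is at most `π · diam K`. -/
theorem perimeter_le_pi_mul_diam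
    (K : Set (EuclideanSpace ℝ (Fin 2))) (hK : K.Nonempty)
    (hKc : IsCompact K) (hKconv : Convex ℝ K)
    (hKint : (interior K).Nonempty) :
    μH[1] (frontier K) ≤ ENNReal.ofReal (Real.pi * diam K) := by
  have h0 : Filter.Tendsto (fun n : ℕ => Real.pi / (n:ℝ)) Filter.atTop (nhds 0) :=
    tendsto_const_div_atTop_nhds_zero_nat _
  have h1 : Filter.Tendsto (fun n : ℕ => Real.tan (Real.pi / (n:ℝ))) Filter.atTop (nhds 0) := by
    have hc : ContinuousAt Real.tan 0 := Real.continuousAt_tan.mpr (by simp)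
    have := hc.tendsto.comp h0
    rwa [Real.tan_zero] at this
  have h2 : Filter.Tendsto (fun n : ℕ => ENNReal.ofReal
      ((1 + Real.tan (Real.pi / (n:ℝ))) * (Real.pi * diam K))) Filter.atTop
      (nhds (ENNReal.ofReal (Real.pi * diam K))) := by
    apply ENNReal.tendsto_ofReal
    have := (h1.const_add 1).mul_const (Real.pi * diam K)
    rwa [add_zero, one_mul] at this
  refine ge_of_tendsto h2 ?_
  filter_upwards [Filter.eventually_ge_atTop 3] with n hn
  exact PerimAux.main_n K hK hKc hKconv hKint n hn
end

section
/- Monotonicity of perimeter under inclusion for planar convex bodies: if K and L are compact convex subsets of ℝ², each with nonempty interior, and K ⊆ L, then the perimeter of K is at most the perimeter of L: ℋ¹(∂K) ≤ ℋ¹(∂L). -/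
open MeasureTheory

/-- Monotonicity of perimeter under inclusion for planar convex bodies. -/
theorem perimeter_mono_of_subset
    (K L : Set (EuclideanSpace ℝ (Fin 2)))
    (hKc : IsCompact K) (hKconv : Convex ℝ K) (hKint : (interior K).Nonempty)
    (hLc : IsCompact L) (hLconv : Convex ℝ L) (hLint : (interior L).Nonempty)
    (hKL : K ⊆ L) :
    μH[1] (frontier K) ≤ μH[1] (frontier L) := by
  have hne : K.Nonempty := hKint.mono interior_subset
  have hex : ∀ u : EuclideanSpace ℝ (Fin 2), ∃ v ∈ K, ∀ w ∈ K, inner ℝ (u - v) (w - v) ≤ 0 := by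
    intro u
    obtain ⟨v, hv, h⟩ := exists_norm_eq_iInf_of_complete_convex hne hKc.isComplete hKconv u
    exact ⟨v, hv, (norm_eq_iInf_iff_real_inner_le_zero hKconv hv).1 h⟩
  choose P hPK hP using hex
  have key : ∀ (a b u v : EuclideanSpace ℝ (Fin 2)), inner ℝ (a - u) (v - u) ≤ 0 →
      inner ℝ (b - v) (u - v) ≤ 0 → ‖u - v‖ ≤ ‖a - b‖ := by
    intro a b u v h1 h2
    have h3 : ‖u - v‖ * ‖u - v‖ ≤ inner ℝ (a - b) (u - v) := by
      rw [← real_inner_self_eq_norm_mul_norm]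
      simp only [inner_sub_left, inner_sub_right] at *
      linarith
    have h4 := real_inner_le_norm (a - b) (u - v)
    by_contra! h
    nlinarith [norm_nonneg (a - b)]
  have hLip : LipschitzWith 1 P := by
    apply LipschitzWith.of_dist_le_mul
    intro a b
    rw [dist_eq_norm, dist_eq_norm, NNReal.coe_one, one_mul]
    exact key a b _ _ (hP a _ (hPK b)) (hP b _ (hPK a))
  have hsub : frontier K ⊆ P '' frontier L := by
    intro x hx
    have hxK : x ∈ K := hKc.isClosed.frontier_subset hx
    obtain ⟨f, hf⟩ := geometric_hahn_banach_open_point hKconv.interior isOpen_interior hx.2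
    set n := (InnerProductSpace.toDual ℝ (EuclideanSpace ℝ (Fin 2))).symm f with hn
    have hfn : ∀ y, inner ℝ n y = f y := fun y => InnerProductSpace.toDual_symm_apply
    have hle : ∀ w ∈ K, f w ≤ f x := by
      intro w hw
      have hcl : w ∈ closure (interior K) := by
        rw [hKconv.closure_interior_eq_closure_of_nonempty_interior hKint]
        exact subset_closure hw
      exact closure_minimal (fun a ha => (hf a ha).le)
        (isClosed_le f.continuous continuous_const) hcl
    have hn0 : n ≠ 0 := by
      rintro h0
      obtain ⟨a, ha⟩ := hKint
      have := hf a ha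
      rw [← hfn, ← hfn, h0] at this
      simp at this
    have hnpos : 0 < ‖n‖ := norm_pos_iff.2 hn0
    have hpre : IsPreconnected ((fun t : ℝ => x + t • n) '' Set.Ici 0) :=
      isPreconnected_Ici.image _ (by fun_prop)
    have hfr : (((fun t : ℝ => x + t • n) '' Set.Ici 0) ∩ frontier L).Nonempty := by
      by_contra hcon
      have hin : (((fun t : ℝ => x + t • n) '' Set.Ici 0) ∩ L).Nonempty :=
        ⟨x, ⟨0, by simp, by simp⟩, hKL hxK⟩
      obtain ⟨R, hR⟩ := hLc.isBounded.exists_norm_le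
      have hout : ¬ ((fun t : ℝ => x + t • n) '' Set.Ici 0) ⊆ L := by
        intro hs
        have hR0 : 0 ≤ R := (norm_nonneg _).trans (hR x (hKL hxK))
        have h1 := hR _ (hs ⟨(2 * R + 1) / ‖n‖, Set.mem_Ici.2 (by positivity), rfl⟩)
        have h2 := hR x (hKL hxK)
        have h3 := norm_sub_le (x + ((2 * R + 1) / ‖n‖) • n) x
        rw [add_sub_cancel_left, norm_smul, Real.norm_of_nonneg (by positivity),
          div_mul_cancel₀ _ hnpos.ne'] at h3
        simp only at h1
        linarith
      obtain ⟨y, hy, hyL⟩ := Set.not_subset.1 hout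
      rcases isPreconnected_iff_subset_of_disjoint.1 hpre (interior L) Lᶜ
        isOpen_interior hLc.isClosed.isOpen_compl (by
          intro z hz
          by_cases hzL : z ∈ L
          · by_cases hzi : z ∈ interior L
            · exact Or.inl hzi
            · exact absurd ⟨z, hz, subset_closure hzL, hzi⟩ hcon
          · exact Or.inr hzL) (by
          ext z
          simp only [Set.mem_inter_iff, Set.mem_compl_iff, Set.mem_empty_iff_false, iff_false]
          exact fun h => h.2.2 (interior_subset h.2.1)) with h | h
      · exact hyL (interior_subset (h hy))
      · obtain ⟨w, hw, hwL⟩ := hin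
        exact h hw hwL
    obtain ⟨_, ⟨t, ht, rfl⟩, hfL⟩ := hfr
    refine ⟨_, hfL, ?_⟩
    have := key (x + t • n) (x + t • n) (P (x + t • n)) x (hP _ _ hxK) (by
      rw [add_sub_cancel_left, inner_smul_left, hfn, map_sub]
      exact mul_nonpos_of_nonneg_of_nonpos ht (by linarith [hle _ (hPK (x + t • n))]))
    rw [sub_self, norm_zero] at this
    exact sub_eq_zero.1 (norm_le_zero_iff.1 this)
  calc μH[1] (frontier K) ≤ μH[1] (P '' frontier L) := measure_mono hsub
    _ ≤ μH[1] (frontier L) := by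
      simpa using hLip.hausdorffMeasure_image_le zero_le_one (frontier L)
end

section
/- Perimeter bounds diameter for planar convex bodies: if K is a nonempty compact convex subset of ℝ² with nonempty interior, then 2 · diam(K) ≤ ℋ¹(∂K); equivalently, the diameter of K is at most half of its perimeter. -/
open Metric MeasureTheory

lemma ray_hits_frontier {E : Type*} [NormedAddCommGroup E] [NormedSpace ℝ E]
    {K : Set E} (hKc : IsCompact K) {x v : E} (hx : x ∈ interior K) (hv : v ≠ 0) :
    ∃ s : ℝ, 0 < s ∧ x + s • v ∈ frontier K := by
  have hpre : IsPreconnected ((fun s : ℝ => x + s • v) '' Set.Ici 0) :=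
    isPreconnected_Ici.image _ (by fun_prop)
  obtain ⟨R, hR⟩ := hKc.isBounded.exists_norm_le
  have h2 : (((fun s : ℝ => x + s • v) '' Set.Ici 0) ∩ Kᶜ).Nonempty := by
    have hvn : 0 < ‖v‖ := norm_pos_iff.mpr hv
    have hR0 : ‖x‖ ≤ R := hR x (interior_subset hx)
    have hnx := norm_nonneg x
    refine ⟨x + ((2 * R + 1) / ‖v‖) • v, ⟨_, ?_, rfl⟩, ?_⟩
    · simp only [Set.mem_Ici]; apply div_nonneg <;> linarith
    · intro hmem
      have h3 := hR _ hmem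
      have h4 : ‖((2 * R + 1) / ‖v‖) • v‖ = 2 * R + 1 := by
        rw [norm_smul, Real.norm_of_nonneg (by apply div_nonneg <;> linarith)]
        field_simp
      have h5 := norm_sub_le (x + ((2 * R + 1) / ‖v‖) • v) x
      rw [add_sub_cancel_left, h4] at h5
      linarith
  have h3 : (((fun s : ℝ => x + s • v) '' Set.Ici 0) ∩ frontier K).Nonempty := by
    by_contra hne
    have hcov : ((fun s : ℝ => x + s • v) '' Set.Ici 0) ⊆ interior K ∪ Kᶜ := by
      intro y hy
      by_cases hyK : y ∈ K
      · left
        by_contra hyi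
        exact hne ⟨y, hy, subset_closure hyK, hyi⟩
      · exact Or.inr hyK
    obtain ⟨y, _, hy1, hy2⟩ := hpre _ _ isOpen_interior hKc.isClosed.isOpen_compl hcov
      ⟨x, ⟨0, by simp, by simp⟩, hx⟩ h2
    exact hy2 (interior_subset hy1)
  obtain ⟨y, ⟨s, hs, rfl⟩, hy⟩ := h3
  refine ⟨s, lt_of_le_of_ne hs ?_, hy⟩
  rintro rfl
  simp only [zero_smul, add_zero] at hy
  exact hy.2 hx

/-- Perimeter bounds diameter for planar convex bodies: for a compact convex
body `K ⊆ ℝ²` with nonempty interior, `2 · diam K ≤ ℋ¹(∂K)`. -/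
theorem two_mul_diam_le_perimeter
    (K : Set (EuclideanSpace ℝ (Fin 2))) (hK : K.Nonempty)
    (hKc : IsCompact K) (hKconv : Convex ℝ K)
    (hKint : (interior K).Nonempty) :
    ENNReal.ofReal (2 * diam K) ≤ μH[1] (frontier K) := by
  obtain ⟨p, hp, q, hq, hle⟩ : ∃ p ∈ K, ∃ q ∈ K, ∀ x ∈ K, ∀ y ∈ K, dist x y ≤ dist p q := by
    obtain ⟨z, hz, hmax⟩ := (hKc.prod hKc).exists_isMaxOn (hK.prod hK)
      (f := fun z => dist z.1 z.2) (continuous_dist.continuousOn)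
    refine ⟨z.1, hz.1, z.2, hz.2, fun x hx y hy => ?_⟩
    exact isMaxOn_iff.mp hmax (x, y) (Set.mk_mem_prod hx hy)
  have hdiam : diam K ≤ dist p q := diam_le_of_forall_dist_le dist_nonneg hle
  obtain ⟨d, hd⟩ : ∃ d, d = dist p q := ⟨_, rfl⟩
  rw [← hd] at hdiam hle
  have hd0 : 0 ≤ d := hd ▸ dist_nonneg
  rcases hd0.eq_or_lt with h0 | hdpos
  · rw [ENNReal.ofReal_of_nonpos (by linarith)]; exact bot_le
  obtain ⟨w, hw⟩ := hKint
  have hwK := interior_subset hw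
  have hKcl := hKc.isClosed
  have hqp : ‖q - p‖ = d := by rw [hd, dist_comm, dist_eq_norm]
  obtain ⟨u, hu⟩ : ∃ u, u = d⁻¹ • (q - p) := ⟨_, rfl⟩
  have hun : ‖u‖ = 1 := by
    rw [hu, norm_smul, hqp, Real.norm_of_nonneg (by positivity)]; field_simp
  have hu0 : u ≠ 0 := by intro h; simp [h] at hun
  have huu : inner ℝ u u = (1 : ℝ) := by rw [real_inner_self_eq_norm_sq, hun]; norm_num
  have hqe : q - p = d • u := by rw [hu, smul_smul, mul_inv_cancel₀ hdpos.ne', one_smul]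
  have huq : inner ℝ u (q - p) = d := by rw [hqe, inner_smul_right, huu, mul_one]
  have hub : ∀ x ∈ K, ∀ y ∈ K, inner ℝ u (x - y) ≤ d := fun x hx y hy => by
    have := real_inner_le_norm u (x - y)
    rw [hun, one_mul, ← dist_eq_norm] at this
    exact this.trans (hle x hx y hy)
  obtain ⟨v, hv⟩ : ∃ v : EuclideanSpace ℝ (Fin 2), v = !₂[-u 1, u 0] := ⟨_, rfl⟩
  have huv : inner ℝ u v = (0 : ℝ) := by
    simp [hv, PiLp.inner_apply, Fin.sum_univ_two]; ring
  have hvv : inner ℝ v v = (1 : ℝ) := by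
    rw [← huu, PiLp.inner_apply, PiLp.inner_apply, Fin.sum_univ_two, Fin.sum_univ_two]
    simp [hv]; ring
  have hv0 : v ≠ 0 := by intro h; simp [h] at hvv
  obtain ⟨a, ha⟩ : ∃ a : ℝ, a = inner ℝ u (w - p) := ⟨_, rfl⟩
  have had : a < d := by
    obtain ⟨s, hs, hs'⟩ := ray_hits_frontier hKc hw hu0
    have := hub _ (hKcl.frontier_subset hs') p hp
    rw [show w + s • u - p = (w - p) + s • u by abel, inner_add_right, inner_smul_right, huu,
      ← ha] at this
    linarith
  have ha0 : 0 < a := by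
    obtain ⟨s, hs, hs'⟩ := ray_hits_frontier hKc hw (neg_ne_zero.mpr hu0)
    have := hub q hq _ (hKcl.frontier_subset hs')
    rw [show q - (w + s • (-u)) = (q - p) - (w - p) + s • u by rw [smul_neg]; abel,
      inner_add_right, inner_sub_right, inner_smul_right, huu, ← ha, huq] at this
    linarith
  obtain ⟨γ, hγ⟩ : ∃ γ : ℝ → EuclideanSpace ℝ (Fin 2), γ = fun t =>
    if t ≤ a then p + (t / a) • (w - p) else q + ((d - t) / (d - a)) • (w - q) := ⟨_, rfl⟩
  have hda : 0 < d - a := by linarith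
  have hγm : Measurable γ := by
    rw [hγ]
    refine Measurable.ite measurableSet_Iic ?_ ?_
    · exact (by fun_prop : Continuous _).measurable
    · exact (by fun_prop : Continuous _).measurable
  have hγi : ∀ t ∈ Set.Ioo 0 d, γ t ∈ interior K := by
    rintro t ⟨h1, h2⟩
    rw [hγ]; dsimp only
    split_ifs with h
    · exact hKconv.add_smul_sub_mem_interior hp hw ⟨by positivity, (div_le_one ha0).mpr h⟩
    · exact hKconv.add_smul_sub_mem_interior hq hw ⟨div_pos (by linarith) hda,
        (div_le_one hda).mpr (by linarith)⟩
  have hγf : ∀ t, inner ℝ u (γ t - p) = t := by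
    intro t
    rw [hγ]; dsimp only
    split_ifs with h
    · rw [add_sub_cancel_left, inner_smul_right, ← ha]; field_simp
    · rw [show q + ((d - t) / (d - a)) • (w - q) - p
        = (q - p) + ((d - t) / (d - a)) • ((w - p) - (q - p)) by
          rw [sub_sub_sub_cancel_right]; abel,
        inner_add_right, inner_smul_right, inner_sub_right u (w - p) (q - p), ← ha, huq]
      field_simp; ring
  obtain ⟨f, hf⟩ : ∃ f : EuclideanSpace ℝ (Fin 2) → ℝ, f = fun x => inner ℝ u (x - p) := ⟨_, rfl⟩
  have hfl : LipschitzWith 1 f := by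
    refine LipschitzWith.of_dist_le_mul fun x y => ?_
    rw [hf, Real.dist_eq, ← inner_sub_right, sub_sub_sub_cancel_right, dist_eq_norm]
    have := abs_real_inner_le_norm u (x - y)
    rw [hun] at this
    simpa using this
  obtain ⟨S, hS⟩ : ∃ S : Set (EuclideanSpace ℝ (Fin 2)),
    S = {y | inner ℝ v (γ (f y)) < inner ℝ v y} := ⟨_, rfl⟩
  have hSm : MeasurableSet S := by
    rw [hS]
    refine measurableSet_lt ?_ ?_
    · exact (by fun_prop : Continuous fun z : EuclideanSpace ℝ (Fin 2) =>
        (inner ℝ v z : ℝ)).measurable.comp (hγm.comp hfl.continuous.measurable)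
    · exact (by fun_prop : Continuous fun z : EuclideanSpace ℝ (Fin 2) =>
        (inner ℝ v z : ℝ)).measurable
  have key : ∀ T : Set (EuclideanSpace ℝ (Fin 2)), Set.Ioo 0 d ⊆ f '' T →
      ENNReal.ofReal d ≤ μH[1] T := by
    intro T hT
    have h1 := hfl.hausdorffMeasure_image_le (d := 1) zero_le_one T
    have h2 : μH[1] (Set.Ioo 0 d) ≤ μH[1] (f '' T) := measure_mono hT
    rw [hausdorffMeasure_real, Real.volume_Ioo, sub_zero] at h2
    rw [hausdorffMeasure_real] at h1
    exact h2.trans (by simpa using h1)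
  have hfs : ∀ t s : ℝ, f (γ t + s • v) = t := by
    intro t s
    rw [hf]; dsimp only
    rw [show γ t + s • v - p = (γ t - p) + s • v by abel, inner_add_right, hγf,
      inner_smul_right, huv]; ring
  have k1 : ENNReal.ofReal d ≤ μH[1] (frontier K ∩ S) := by
    refine key _ fun t ht => ?_
    obtain ⟨s, hs, hs'⟩ := ray_hits_frontier hKc (hγi t ht) hv0
    refine ⟨_, ⟨hs', ?_⟩, hfs t s⟩
    rw [hS, Set.mem_setOf_eq, hfs, inner_add_right, inner_smul_right, hvv]
    linarith
  have k2 : ENNReal.ofReal d ≤ μH[1] (frontier K \ S) := by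
    refine key _ fun t ht => ?_
    obtain ⟨s, hs, hs'⟩ := ray_hits_frontier hKc (hγi t ht) (neg_ne_zero.mpr hv0)
    rw [smul_neg, ← neg_smul] at hs'
    refine ⟨_, ⟨hs', ?_⟩, hfs t (-s)⟩
    rw [hS, Set.mem_setOf_eq, hfs, inner_add_right, inner_smul_right, hvv]
    linarith
  calc ENNReal.ofReal (2 * diam K) ≤ ENNReal.ofReal (d + d) :=
        ENNReal.ofReal_le_ofReal (by linarith)
    _ = ENNReal.ofReal d + ENNReal.ofReal d := ENNReal.ofReal_add hd0 hd0
    _ ≤ μH[1] (frontier K ∩ S) + μH[1] (frontier K \ S) := add_le_add k1 k2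
    _ = μH[1] (frontier K) := measure_inter_add_diff _ hSm
end
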